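/- arXiv:1901.03406 — 3 statements merged into one kernel-verified Lean document; each statement's English description precedes it below -/
import Mathlib

section
/- Let G be a countable, infinite discrete group. Then there exists a family of continuum many (2^ℵ₀) free, metrizable, minimal G-flows that are mutually disjoint, i.e., the product of the flows in every finite subfamily is minimal. -/
open Pointwise

section Defs

variable (G : Type*) [Group G]

/-- The right-shift of `G` on `G → A`: `(g • z) h = z (h * g)`. -/
instance (priority := high) shiftSMul (A : Type*) : SMul G (G → A) :=
  ⟨fun g z h => z (h * g)⟩

/-- The right-shift action of `G` on `G → A` is a `G`-action (the Bernoulli flow when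
`A = Bool`). -/
instance shiftMulAction (A : Type*) : MulAction G (G → A) where
  one_smul z := funext fun h => by show z (h * 1) = z h; rw [mul_one]
  mul_smul g₁ g₂ z := funext fun h => by
    show z (h * (g₁ * g₂)) = z (h * g₁ * g₂)
    rw [mul_assoc]

/-- `S ⊆ G` is `D`-separated if `Dg ∩ Dh = ∅` for all distinct `g, h ∈ S`. -/
def DSeparated (D S : Set G) : Prop :=
  ∀ g ∈ S, ∀ h ∈ S, g ≠ h → Disjoint (D * ({g} : Set G)) (D * ({h} : Set G))

/-- The separated covering property for a `G`-flow `X`: for every finite `D ⊆ G`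
and every nonempty open `U ⊆ X` there is a `D`-separated `S ⊆ G` with `S⁻¹U = X`. -/
def SCP (X : Type*) [TopologicalSpace X] [MulAction G X] : Prop :=
  ∀ D : Set G, D.Finite → ∀ U : Set X, IsOpen U → U.Nonempty →
    ∃ S : Set G, DSeparated G D S ∧ ∀ x : X, ∃ s ∈ S, s • x ∈ U

/-- A `G`-flow is minimal if every orbit is dense. -/
def IsMinimalFlow (X : Type*) [TopologicalSpace X] [MulAction G X] : Prop :=
  ∀ x : X, Dense (MulAction.orbit G x)

/-- Two `G`-flows `X` and `Y` are disjoint if the only closed `G`-invariant subset of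
`X × Y` projecting onto both factors is `X × Y` itself. -/
def FlowsDisjoint (X Y : Type*) [TopologicalSpace X] [TopologicalSpace Y]
    [MulAction G X] [MulAction G Y] : Prop :=
  ∀ J : Set (X × Y), IsClosed J → (∀ (g : G), ∀ p ∈ J, g • p ∈ J) →
    Prod.fst '' J = Set.univ → Prod.snd '' J = Set.univ → J = Set.univ

end Defs

universe u v

/-- A bundled `G`-flow carrier: a type with a topology and a `G`-action. -/
structure GFlow (G : Type u) [Group G] : Type (u + 1) where
  carrier : Type u
  [topology : TopologicalSpace carrier]
  [mulAction : MulAction G carrier]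

attribute [instance] GFlow.topology GFlow.mulAction


namespace MF

/-- the class table -/
def tab (i j : ZMod 5) : ZMod 5 := if i = j then i + 1 else 3 * (i + j)

theorem tab_ne_left : ∀ i j, tab i j ≠ i := by decide
theorem tab_ne_right : ∀ i j, tab i j ≠ j := by decide
theorem tab_comm : ∀ i j, tab i j = tab j i := by decide
theorem tab_back : ∀ i j, tab (tab i j) j ≠ i := by decide
theorem tab_diag : ∀ i, tab (tab i i) (tab i i) ≠ i := by decide

/-- letters -/
abbrev Let (n : ℕ) := ZMod 5 × Fin n × Bool

noncomputable def rk {n : ℕ} (a : Let n) : ℕ := Fintype.equivFin (Let n) a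

theorem rk_inj {n : ℕ} {a b : Let n} (h : rk a = rk b) : a = b :=
  (Fintype.equivFin (Let n)).injective (Fin.ext h)

/-- the choice of the third letter -/
noncomputable def third {n : ℕ} (a : Let n) (e : Fin n) (b : Let n) : Let n :=
  (tab a.1 b.1, e, decide (rk a < rk b))

theorem third_ne_left {n : ℕ} (a : Let n) (e : Fin n) (b : Let n) : third a e b ≠ a := by
  intro h; exact tab_ne_left a.1 b.1 (congrArg Prod.fst h)

theorem third_ne_right {n : ℕ} (a : Let n) (e : Fin n) (b : Let n) : third a e b ≠ b := by
  intro h; exact tab_ne_right a.1 b.1 (congrArg Prod.fst h)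

theorem third_inj {n : ℕ} {a b a' b' : Let n} {e e' : Fin n} (h : third a e b = third a' e' b') :
    e = e' ∧ (rk a < rk b ↔ rk a' < rk b') := by
  have h1 := congrArg (fun x => x.2.1) h
  have h2 := congrArg (fun x => x.2.2) h
  simp only [third] at h1 h2
  exact ⟨h1, by simpa using h2⟩

theorem third_back {n : ℕ} (a b d : Let n) (e e' : Fin n) (h : third a e b = d)
    (h' : third d e' b = a) : False := by
  subst h
  exact tab_back a.1 b.1 (congrArg Prod.fst h')

theorem third_back' {n : ℕ} (a b d : Let n) (e e' : Fin n) (h : third a e b = d)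
    (h' : third b e' d = a) : False := by
  subst h
  have := congrArg Prod.fst h'
  simp only [third] at this
  rw [tab_comm] at this
  exact tab_back a.1 b.1 this

theorem third_back'' {n : ℕ} (a b d : Let n) (e e' : Fin n) (h : third b e a = d)
    (h' : third d e' b = a) : False := by
  subst h
  have := congrArg Prod.fst h'
  simp only [third] at this
  rw [tab_comm b.1 a.1] at this
  exact tab_back a.1 b.1 this

theorem third_back3 {n : ℕ} (a b d : Let n) (e e' : Fin n) (h : third b e a = d)
    (h' : third b e' d = a) : False := by
  subst h
  have := congrArg Prod.fst h'
  simp only [third] at this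
  rw [tab_comm b.1 a.1, tab_comm] at this
  exact tab_back a.1 b.1 this

theorem third_two {n : ℕ} (a a' : Let n) (e e' : Fin n) (h : third a e a = a')
    (h' : third a' e' a' = a) : False := by
  subst h
  exact tab_diag a.1 (congrArg Prod.fst h')

/-- the triple determines everything -/
theorem third_triple {n : ℕ} {a b a' b' : Let n} {e e' : Fin n} (hab : a ≠ b) (hab' : a' ≠ b')
    (h1 : a = a' ∨ a = b' ∨ a = third a' e' b')
    (h2 : b = a' ∨ b = b' ∨ b = third a' e' b')
    (h3 : third a e b = a' ∨ third a e b = b' ∨ third a e b = third a' e' b') :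
    a = a' ∧ e = e' ∧ b = b' := by
  have n1 := third_ne_left a e b
  have n2 := third_ne_right a e b
  have n1' := third_ne_left a' e' b'
  have n2' := third_ne_right a' e' b'
  rcases h3 with h3 | h3 | h3
  · rcases h1 with h1 | h1 | h1
    · exact absurd (h3.trans h1.symm) n1
    · rcases h2 with h2 | h2 | h2
      · exact absurd (h3.trans h2.symm) n2
      · exact absurd (h1.trans h2.symm) hab
      · subst h1; exact (third_back'' b a a' e e' h3 h2.symm).elim
    · rcases h2 with h2 | h2 | h2
      · exact absurd (h3.trans h2.symm) n2
      · subst h2; exact (third_back a b a' e e' h3 h1.symm).elim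
      · exact absurd (h1.trans h2.symm) hab
  · rcases h1 with h1 | h1 | h1
    · rcases h2 with h2 | h2 | h2
      · exact absurd (h1.trans h2.symm) hab
      · exact absurd (h3.trans h2.symm) n2
      · subst h1; exact (third_back3 b a b' e e' h3 h2.symm).elim
    · exact absurd (h3.trans h1.symm) n1
    · rcases h2 with h2 | h2 | h2
      · subst h2; exact (third_back' a b b' e e' h3 h1.symm).elim
      · exact absurd (h3.trans h2.symm) n2
      · exact absurd (h1.trans h2.symm) hab
  · obtain ⟨he, ho⟩ := third_inj h3
    rcases h1 with h1 | h1 | h1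
    · rcases h2 with h2 | h2 | h2
      · exact absurd (h1.trans h2.symm) hab
      · exact ⟨h1, he, h2⟩
      · exact absurd (h3.trans h2.symm) n2
    · rcases h2 with h2 | h2 | h2
      · subst h1; subst h2
        have : rk a ≠ rk b := fun h => hab (rk_inj h)
        omega
      · exact absurd (h1.trans h2.symm) hab
      · exact absurd (h3.trans h2.symm) n2
    · exact absurd (h3.trans h1.symm) n1

/-- counting lemma -/
theorem avoid {ι β τ : Type*} [Fintype ι] [DecidableEq ι] [Finite τ] (L : Set β) (hL : L.Infinite)
    (bad : τ → Set (ι → β)) (co : τ → ι)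
    (h : ∀ t, ∀ r ∈ bad t, ∀ r' ∈ bad t, (∀ i, r i ∈ L) → (∀ i, r' i ∈ L) →
      (∀ i, i ≠ co t → r i = r' i) → r = r') :
    ∃ r : ι → β, (∀ i, r i ∈ L) ∧ ∀ t, r ∉ bad t := by
  classical
  have := Fintype.ofFinite τ
  obtain ⟨F, hFL, hF⟩ := hL.exists_subset_card_eq (Fintype.card τ + 1)
  by_contra hcon
  push Not at hcon
  have hb : ∀ r : ι → F, ∃ t, (fun i => (r i : β)) ∈ bad t := fun r =>
    hcon _ (fun i => hFL (r i).2)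
  choose tt htt using hb
  -- map r to (t, restriction)
  have hcard : ∀ t, (Finset.univ.filter fun r : ι → F => tt r = t).card ≤
      F.card ^ (Fintype.card ι - 1) := by
    intro t
    have : Fintype.card ({i // i ≠ co t} → F) = F.card ^ (Fintype.card ι - 1) := by
      rw [Fintype.card_fun, Fintype.card_coe]
      congr 1
      simp [Fintype.card_subtype_compl]
    rw [← this, ← Finset.card_univ]
    apply Finset.card_le_card_of_injOn (fun r i => r i.1) (fun _ _ => Finset.mem_univ _)
    intro r hr r' hr' he
    simp only [Finset.coe_filter, Finset.mem_univ, true_and, Set.mem_ofPred_eq] at hr hr'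
    have := h t _ (hr ▸ htt r) _ (hr' ▸ htt r') (fun i => hFL (r i).2) (fun i => hFL (r' i).2)
      (fun i hi => congrArg Subtype.val (congrFun he ⟨i, hi⟩))
    funext i
    exact Subtype.ext (congrFun this i)
  have htot : Fintype.card (ι → F) ≤ Fintype.card τ * F.card ^ (Fintype.card ι - 1) := by
    rw [← Finset.card_univ, Finset.card_eq_sum_card_fiberwise (f := tt) (t := Finset.univ)
      (fun _ _ => Finset.mem_univ _)]
    refine (Finset.sum_le_sum fun t _ => hcard t).trans ?_
    simp
  rw [Fintype.card_fun, Fintype.card_coe] at htot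
  rcases isEmpty_or_nonempty ι with hι | hι
  · have : Nonempty τ := by
      obtain ⟨t, _⟩ := hcon (fun i => (hι.false i).elim) (fun i => (hι.false i).elim)
      exact ⟨t⟩
    exact hι.false (co this.some)
  · have hpos : 0 < Fintype.card ι := Fintype.card_pos
    obtain ⟨m, hm⟩ : ∃ m, Fintype.card ι = m + 1 := ⟨_, (Nat.succ_pred_eq_of_pos hpos).symm⟩
    rw [hm, Nat.add_sub_cancel, pow_succ, mul_comm] at htot
    have h2 : 0 < F.card ^ m := pow_pos (by omega) _
    have := Nat.le_of_mul_le_mul_right htot h2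
    omega


theorem const_or_inj {β γ : Type*} (L : Set β) (hL : L.Infinite) (F : β → γ) :
    ∃ L' ⊆ L, L'.Infinite ∧ ((∀ x ∈ L', ∀ y ∈ L', F x = F y) ∨ Set.InjOn F L') := by
  by_cases h : (F '' L).Finite
  · by_contra hcon
    push Not at hcon
    apply hL
    refine Set.Finite.of_finite_fibers F h ?_
    intro z _
    by_contra hinf
    exact (hcon (L ∩ F ⁻¹' {z}) Set.inter_subset_left hinf).1.elim (fun x hx => by
      obtain ⟨hx, y, hy, hne⟩ := hx
      exact hne (hx.2.trans hy.2.symm))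
  · obtain ⟨s, hs, hb⟩ := Set.exists_subset_bijOn L F
    refine ⟨s, hs, ?_, Or.inr hb.injOn⟩
    intro hfin
    exact h (hb.image_eq ▸ hfin.image F)

theorem const_or_inj_all {β γ τ : Type*} (T : Finset τ) (L : Set β) (hL : L.Infinite)
    (F : τ → β → γ) :
    ∃ L' ⊆ L, L'.Infinite ∧ ∀ t ∈ T, ((∀ x ∈ L', ∀ y ∈ L', F t x = F t y) ∨ Set.InjOn (F t) L') := by
  classical
  induction T using Finset.induction_on with
  | empty => exact ⟨L, subset_rfl, hL, by simp⟩
  | insert t T _ ih =>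
    obtain ⟨L1, h1, h2, h3⟩ := ih
    obtain ⟨L2, k1, k2, k3⟩ := const_or_inj L1 h2 (F t)
    refine ⟨L2, k1.trans h1, k2, ?_⟩
    intro u hu
    rcases Finset.mem_insert.1 hu with rfl | hu
    · exact k3
    · rcases h3 u hu with h | h
      · exact Or.inl fun x hx y hy => h x (k1 hx) y (k1 hy)
      · exact Or.inr (h.mono k1)

variable {G : Type*} [Group G]

def Rel (c a e b f c' a' e' b' : G) : Prop :=
  c * a⁻¹ * e * b = f * (c' * a'⁻¹ * e' * b')

/-- the letter `i` occurs exactly once -/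
def Once {ι : Type*} (i c a b c' a' b' : ι) : Prop :=
  (c = i ∧ a ≠ i ∧ b ≠ i ∧ c' ≠ i ∧ a' ≠ i ∧ b' ≠ i) ∨
  (c ≠ i ∧ a = i ∧ b ≠ i ∧ c' ≠ i ∧ a' ≠ i ∧ b' ≠ i) ∨
  (c ≠ i ∧ a ≠ i ∧ b = i ∧ c' ≠ i ∧ a' ≠ i ∧ b' ≠ i) ∨
  (c ≠ i ∧ a ≠ i ∧ b ≠ i ∧ c' = i ∧ a' ≠ i ∧ b' ≠ i) ∨
  (c ≠ i ∧ a ≠ i ∧ b ≠ i ∧ c' ≠ i ∧ a' = i ∧ b' ≠ i) ∨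
  (c ≠ i ∧ a ≠ i ∧ b ≠ i ∧ c' ≠ i ∧ a' ≠ i ∧ b' = i)

theorem once_unique {ι : Type*} {i c a b c' a' b' : ι} (h : Once i c a b c' a' b')
    (e f e' : G) (r s : ι → G) (hrs : ∀ j, j ≠ i → r j = s j)
    (hr : Rel (r c) (r a) e (r b) f (r c') (r a') e' (r b'))
    (hs : Rel (s c) (s a) e (s b) f (s c') (s a') e' (s b')) : r i = s i := by
  unfold Rel at hr hs
  rcases h with h | h | h | h | h | h <;> obtain ⟨h1, h2, h3, h4, h5, h6⟩ := h
  · subst h1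
    rw [hrs _ h2, hrs _ h3, hrs _ h4, hrs _ h5, hrs _ h6, ← hs] at hr
    simpa using hr
  · subst h2
    rw [hrs _ h1, hrs _ h3, hrs _ h4, hrs _ h5, hrs _ h6, ← hs] at hr
    simpa using hr
  · subst h3
    rw [hrs _ h1, hrs _ h2, hrs _ h4, hrs _ h5, hrs _ h6, ← hs] at hr
    simpa using hr
  · subst h4
    rw [hrs _ h1, hrs _ h2, hrs _ h3, hrs _ h5, hrs _ h6, hs] at hr
    simpa using hr.symm
  · subst h5
    rw [hrs _ h1, hrs _ h2, hrs _ h3, hrs _ h4, hrs _ h6, hs] at hr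
    simpa using hr.symm
  · subst h6
    rw [hrs _ h1, hrs _ h2, hrs _ h3, hrs _ h4, hrs _ h5, hs] at hr
    simpa using hr.symm

/-- generic letters -/
theorem generic_letters [Infinite G] (n : ℕ) (ε : Fin n → G) :
    ∃ r : Let n → G,
      (∀ (i c a b c' a' b' : Let n) (e f e' : Fin n), Once i c a b c' a' b' →
        ¬ Rel (r c) (r a) (ε e) (r b) (ε f) (r c') (r a') (ε e') (r b')) ∧
      (∀ (c a a' : Let n) (e f : Fin n), a ≠ a' → c ≠ a →
        Rel (r c) (r a) (ε e) (r a) (ε f) (r c) (r a') (ε e) (r a') →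
        (r a)⁻¹ * ε e * r a = (r a')⁻¹ * ε e * r a') ∧
      (∀ (a b : Let n) (f : Fin n), a ≠ b → r a ≠ ε f * r b) := by
  classical
  obtain ⟨L, -, hL, hL'⟩ := const_or_inj_all (Finset.univ : Finset (Fin n)) (Set.univ : Set G)
    Set.infinite_univ (fun e x => x⁻¹ * ε e * x)
  let τ1 := (Let n × Let n × Let n × Let n) × (Let n × Let n × Let n) × (Fin n × Fin n × Fin n)
  let τ2 := (Let n × Let n × Let n) × (Fin n × Fin n)
  let τ3 := (Let n × Let n) × Fin n
  let bad1 : τ1 → Set (Let n → G) := fun t => {r |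
    Once t.1.1 t.1.2.1 t.1.2.2.1 t.1.2.2.2 t.2.1.1 t.2.1.2.1 t.2.1.2.2 ∧
    Rel (r t.1.2.1) (r t.1.2.2.1) (ε t.2.2.1) (r t.1.2.2.2) (ε t.2.2.2.1)
      (r t.2.1.1) (r t.2.1.2.1) (ε t.2.2.2.2) (r t.2.1.2.2)}
  let bad2 : τ2 → Set (Let n → G) := fun t => {r | t.1.2.1 ≠ t.1.2.2 ∧ t.1.1 ≠ t.1.2.1 ∧
    Rel (r t.1.1) (r t.1.2.1) (ε t.2.1) (r t.1.2.1) (ε t.2.2) (r t.1.1) (r t.1.2.2) (ε t.2.1)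
      (r t.1.2.2) ∧
    (r t.1.2.1)⁻¹ * ε t.2.1 * r t.1.2.1 ≠ (r t.1.2.2)⁻¹ * ε t.2.1 * r t.1.2.2}
  let bad3 : τ3 → Set (Let n → G) := fun t => {r | t.1.1 ≠ t.1.2 ∧ r t.1.1 = ε t.2 * r t.1.2}
  obtain ⟨r, hr, hb⟩ := avoid (ι := Let n) (τ := τ1 ⊕ τ2 ⊕ τ3) L hL
    (Sum.elim bad1 (Sum.elim bad2 bad3))
    (Sum.elim (fun t => t.1.1) (Sum.elim (fun t => t.1.2.1) (fun t => t.1.1))) (by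
    rintro (t | t | t) r h1 s h2 hrL hsL hrs
    · simp only [Sum.elim_inl] at h1 h2 hrs
      have := once_unique h1.1 _ _ _ r s hrs h1.2 h2.2
      funext j
      by_cases hj : j = t.1.1
      · rw [hj]; exact this
      · exact hrs j hj
    · simp only [Sum.elim_inl, Sum.elim_inr] at h1 h2 hrs
      obtain ⟨n1, n2, n3, n4⟩ := h1
      obtain ⟨-, -, m3, m4⟩ := h2
      have : r t.1.2.1 = s t.1.2.1 := by
        rcases hL' t.2.1 (Finset.mem_univ _) with h | h
        · exact absurd (h _ (hrL _) _ (hrL _)) n4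
        · apply h (hrL _) (hsL _)
          unfold Rel at n3 m3
          rw [hrs _ n1.symm, hrs _ n2] at n3
          rw [← m3] at n3
          simpa [mul_assoc] using n3
      funext j
      by_cases hj : j = t.1.2.1
      · rw [hj]; exact this
      · exact hrs j hj
    · simp only [Sum.elim_inr] at h1 h2 hrs
      funext j
      by_cases hj : j = t.1.1
      · rw [hj, h1.2, h2.2, hrs _ h1.1.symm]
      · exact hrs j hj)
  refine ⟨r, ?_, ?_, ?_⟩
  · intro i c a b c' a' b' e f e' ho hrel
    exact hb (Sum.inl ((i, c, a, b), (c', a', b'), (e, f, e'))) ⟨ho, hrel⟩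
  · intro c a a' e f h1 h2 h3
    by_contra h4
    exact hb (Sum.inr (Sum.inl ((c, a, a'), (e, f)))) ⟨h1, h2, h3, h4⟩
  · intro a b f h1 h2
    exact hb (Sum.inr (Sum.inr ((a, b), f))) ⟨h1, h2⟩

theorem no_conflict {n : ℕ} (ε : Fin n → G) (r : Let n → G)
    (H1 : ∀ (i c a b c' a' b' : Let n) (e f e' : Fin n), Once i c a b c' a' b' →
        ¬ Rel (r c) (r a) (ε e) (r b) (ε f) (r c') (r a') (ε e') (r b'))
    (H2 : ∀ (c a a' : Let n) (e f : Fin n), a ≠ a' → c ≠ a →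
        Rel (r c) (r a) (ε e) (r a) (ε f) (r c) (r a') (ε e) (r a') →
        (r a)⁻¹ * ε e * r a = (r a')⁻¹ * ε e * r a')
    (a b a' b' : Let n) (e f e' : Fin n)
    (h : Rel (r (third a e b)) (r a) (ε e) (r b) (ε f) (r (third a' e' b')) (r a') (ε e') (r b')) :
    r (third a e b) * (r a)⁻¹ * ε e * r b = r (third a' e' b') * (r a')⁻¹ * ε e' * r b' := by
  have n1 := third_ne_left a e b
  have n2 := third_ne_right a e b
  have n1' := third_ne_left a' e' b'
  have n2' := third_ne_right a' e' b'
  have H : ∀ i, ¬ Once i (third a e b) a b (third a' e' b') a' b' := fun i hi =>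
    H1 _ _ _ _ _ _ _ _ _ _ hi h
  by_cases hab : a = b
  · by_cases hab' : a' = b'
    · subst hab; subst hab'
      by_cases hc : third a e a = third a' e' a'
      · obtain ⟨he, -⟩ := third_inj hc
        subst he
        by_cases haa : a = a'
        · rw [haa]
        · rw [← hc] at h ⊢
          have := H2 _ _ _ _ _ haa n1 h
          simp only [mul_assoc] at this ⊢
          rw [this]
      · have k1 := H (third a e a)
        have k2 := H (third a' e' a')
        have e1 : third a e a = a' := by unfold Once at k1; grind
        have e2 : third a' e' a' = a := by unfold Once at k2; grind
        exact (third_two a a' e e' e1 e2).elim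
    · exfalso
      have k1 := H (third a' e' b')
      have k2 := H a'
      have k3 := H b'
      unfold Once at k1 k2 k3
      generalize third a e b = c at *
      generalize third a' e' b' = c' at *
      grind
  · by_cases hab' : a' = b'
    · exfalso
      have k1 := H (third a e b)
      have k2 := H a
      have k3 := H b
      unfold Once at k1 k2 k3
      generalize third a e b = c at *
      generalize third a' e' b' = c' at *
      grind
    · have k1 := H (third a e b)
      have k2 := H a
      have k3 := H b
      have : a = a' ∧ e = e' ∧ b = b' := by
        apply third_triple hab hab'
        · unfold Once at k2; grind
        · unfold Once at k3; grind
        · unfold Once at k1; grind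
      obtain ⟨rfl, rfl, rfl⟩ := this
      rfl

def Sep (E B : Set G) : Prop := ∀ b ∈ B, ∀ b' ∈ B, b * b'⁻¹ ∈ E → b = b'

theorem core [Infinite G] (E : Set G) (hE : E.Finite) (h1 : (1 : G) ∈ E) :
    ∃ R : Set G, R.Finite ∧ R.Nonempty ∧ Sep E R ∧ ∃ φ : G → G,
      (∀ k ∈ R⁻¹ * E * R, φ k ∈ R) ∧
      (∀ k ∈ R⁻¹ * E * R, ∀ k' ∈ R⁻¹ * E * R,
        (φ k * k) * (φ k' * k')⁻¹ ∈ E → φ k * k = φ k' * k') := by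
  classical
  obtain ⟨n, ε, hε⟩ : ∃ (n : ℕ) (ε : Fin n → G), Set.range ε = E := by
    obtain ⟨n, f, hf, hr⟩ := hE.fin_param
    exact ⟨n, f, hr⟩
  subst hε
  obtain ⟨r, H1, H2, H3⟩ := generic_letters n ε
  obtain ⟨e0, he0⟩ := h1
  have hrep : ∀ k : G, ∃ t : Let n × Fin n × Let n, k ∈ (Set.range r)⁻¹ * Set.range ε * Set.range r →
      k = (r t.1)⁻¹ * ε t.2.1 * r t.2.2 := by
    intro k
    by_cases hk : k ∈ (Set.range r)⁻¹ * Set.range ε * Set.range r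
    · obtain ⟨x, ⟨y, hy, z, ⟨e, rfl⟩, rfl⟩, w, ⟨b, rfl⟩, rfl⟩ := hk
      obtain ⟨a, ha⟩ := Set.mem_inv.1 hy
      exact ⟨(a, e, b), fun _ => by simp [ha]⟩
    · exact ⟨((0, e0, true), e0, (0, e0, true)), fun h => absurd h hk⟩
  choose t ht using hrep
  refine ⟨Set.range r, Set.finite_range r, ⟨_, ⟨(0, e0, true), rfl⟩⟩, ?_,
    fun k => r (third (t k).1 (t k).2.1 (t k).2.2), fun k _ => ⟨_, rfl⟩, ?_⟩
  · rintro _ ⟨a, rfl⟩ _ ⟨b, rfl⟩ ⟨f, hf⟩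
    by_contra hne
    refine H3 a b f (fun h => hne (by rw [h])) ?_
    rw [hf]; group
  · intro k hk k' hk' ⟨f, hf⟩
    have := no_conflict ε r H1 H2 (t k).1 (t k).2.2 (t k').1 (t k').2.2 (t k).2.1 f (t k').2.1 (by
      have e1 := ht k hk
      have e2 := ht k' hk'
      have hf' := eq_mul_inv_iff_mul_eq.1 hf
      unfold Rel
      simp only [mul_assoc] at e1 e2 hf' ⊢
      rw [← e1, ← e2, ← hf'])
    simp only [mul_assoc] at this
    have e1 := ht k hk
    have e2 := ht k' hk'
    simp only [mul_assoc] at e1 e2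
    rw [← e1, ← e2] at this
    exact this

/-- maximal separated sets -/
def MaxSep (M S : Set G) : Prop := Sep M S ∧ ∀ g : G, ∃ s ∈ S, s * g⁻¹ ∈ M

theorem MaxSep.translate {M S : Set G} (h : MaxSep M S) (g : G) : MaxSep M {s | s * g ∈ S} := by
  refine ⟨?_, ?_⟩
  · intro s hs s' hs' hm
    have := h.1 _ hs _ hs' (by simpa [mul_assoc] using hm)
    simpa using this
  · intro k
    obtain ⟨s, hs, hm⟩ := h.2 (k * g)
    exact ⟨s * g⁻¹, by simpa using hs, by simpa [mul_assoc] using hm⟩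

theorem multi [Infinite G] {ι : Type*} (E : Set G) (hE : E.Finite) (h1 : (1 : G) ∈ E)
    (I : Finset ι) :
    ∃ (B : ι → Set G) (Q : Set G), Q.Finite ∧ Q.Nonempty ∧ Sep E Q ∧
      (∀ i ∈ I, (B i).Finite ∧ (B i).Nonempty ∧ Sep E (B i)) ∧
      ∀ S : ι → Set G, (∀ i ∈ I, MaxSep ((B i)⁻¹ * E * B i) (S i)) →
        ∃ q ∈ Q, ∀ i ∈ I, ∃ b ∈ B i, ∃ s ∈ S i, q = b * s := by
  classical
  induction I using Finset.induction_on with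
  | empty =>
    refine ⟨fun _ => ∅, {1}, Set.finite_singleton _, Set.singleton_nonempty _, ?_, by simp, by simp⟩
    rintro _ rfl _ rfl _; rfl
  | insert i I hi ih =>
    obtain ⟨B, Q, hQf, ⟨q0, hq0⟩, hQ, hB, hS⟩ := ih
    obtain ⟨R, hRf, ⟨r0, hr0⟩, hR, φ, hφ, hφ'⟩ := core (Q⁻¹ * E * Q) ((hQf.inv.mul hE).mul hQf)
      ⟨q0⁻¹, ⟨q0⁻¹, by simpa using hq0, 1, h1, by simp⟩, q0, hq0, by simp⟩
    have hK : (Q * R)⁻¹ * E * (Q * R) = R⁻¹ * (Q⁻¹ * E * Q) * R := by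
      rw [mul_inv_rev]; simp only [mul_assoc]
    refine ⟨Function.update B i (Q * R),
      {g | ∃ q ∈ Q, ∃ k ∈ R⁻¹ * (Q⁻¹ * E * Q) * R, g = q * (φ k * k)}, ?_, ?_, ?_, ?_, ?_⟩
    · refine (hQf.mul ((((hRf.inv.mul ((hQf.inv.mul hE).mul hQf)).mul hRf)).image
        (fun k => φ k * k))).subset ?_
      rintro g ⟨q, hq, k, hk, rfl⟩
      exact ⟨q, hq, _, ⟨k, hk, rfl⟩, rfl⟩
    · refine ⟨_, q0, hq0, r0⁻¹ * (q0⁻¹ * 1 * q0) * r0, ?_, rfl⟩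
      exact Set.mul_mem_mul (Set.mul_mem_mul (by simpa using hr0)
        (Set.mul_mem_mul (Set.mul_mem_mul (by simpa using hq0) h1) hq0)) hr0
    · rintro _ ⟨q, hq, k, hk, rfl⟩ _ ⟨q', hq', k', hk', rfl⟩ hm
      have e1 : φ k * k = φ k' * k' := by
        apply hφ' k hk k' hk'
        refine ⟨q⁻¹ * (q * (φ k * k) * (q' * (φ k' * k'))⁻¹), ⟨q⁻¹, by simpa using hq, _, hm, rfl⟩,
          q', hq', ?_⟩
        group
      rw [e1] at hm ⊢
      rw [hQ q hq q' hq' (by convert hm using 1; group)]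
    · intro j hj
      rcases Finset.mem_insert.1 hj with rfl | hj2
      · simp only [Function.update_self]
        refine ⟨hQf.mul hRf, ⟨_, Set.mul_mem_mul hq0 hr0⟩, ?_⟩
        rintro _ ⟨q, hq, r, hr, rfl⟩ _ ⟨q', hq', r', hr', rfl⟩ hm
        simp only at hm ⊢
        have e1 : r = r' := by
          apply hR r hr r' hr'
          refine ⟨q⁻¹ * (q * r * (q' * r')⁻¹), ⟨q⁻¹, by simpa using hq, _, hm, rfl⟩, q', hq', ?_⟩
          group
        subst e1
        rw [hQ q hq q' hq' (by convert hm using 1; group)]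
      · rw [Function.update_of_ne (by rintro rfl; exact hi hj2)]
        exact hB j hj2
    · intro S hSS
      have hnew := hSS i (Finset.mem_insert_self _ _)
      rw [Function.update_self, hK] at hnew
      obtain ⟨k, hkS, hk⟩ := hnew.2 1
      simp only [inv_one, mul_one] at hk
      obtain ⟨q, hq, hqq⟩ := hS (fun j => {s | s * (φ k * k) ∈ S j}) (by
        intro j hj
        have := hSS j (Finset.mem_insert_of_mem hj)
        rw [Function.update_of_ne (by rintro rfl; exact hi hj)] at this
        exact this.translate _)
      refine ⟨_, ⟨q, hq, k, hk, rfl⟩, ?_⟩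
      intro j hj
      rcases Finset.mem_insert.1 hj with rfl | hj2
      · refine ⟨q * φ k, ?_, k, hkS, by group⟩
        rw [Function.update_self]
        exact Set.mul_mem_mul hq (hφ k hk)
      · obtain ⟨b, hb, s, hs, e⟩ := hqq j hj2
        refine ⟨b, ?_, _, hs, by rw [e]; group⟩
        rw [Function.update_of_ne (by rintro rfl; exact hi hj2)]
        exact hb


theorem exists_max_indep {V : Type*} (r : V → V → Prop) (hs : ∀ x y, r x y → r y x)
    (hir : ∀ x, ¬ r x x) (S0 : Set V) (h0 : ∀ x ∈ S0, ∀ y ∈ S0, ¬ r x y) :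
    ∃ S, S0 ⊆ S ∧ (∀ x ∈ S, ∀ y ∈ S, ¬ r x y) ∧ ∀ v, v ∉ S → ∃ s ∈ S, r s v := by
  obtain ⟨S, hS0, hS⟩ := zorn_subset_nonempty {S : Set V | ∀ x ∈ S, ∀ y ∈ S, ¬ r x y} (by
    intro c hc hch hne
    refine ⟨⋃₀ c, ?_, fun s hs => Set.subset_sUnion_of_mem hs⟩
    rintro x ⟨s, hs, hx⟩ y ⟨t, ht, hy⟩
    rcases hch.total hs ht with h | h
    · exact hc ht x (h hx) y hy
    · exact hc hs x hx y (h hy)) S0 h0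
  refine ⟨S, hS0, hS.prop, ?_⟩
  intro v hv
  by_contra hcon
  push Not at hcon
  apply hv
  have hins : insert v S ∈ {S : Set V | ∀ x ∈ S, ∀ y ∈ S, ¬ r x y} := by
    rintro x (rfl | hx) y (rfl | hy)
    · exact hir _
    · exact fun h => hcon y hy (hs _ _ h)
    · exact hcon x hx
    · exact hS.prop x hx y hy
  exact hS.le_of_ge hins (Set.subset_insert v S) (Set.mem_insert v S)

theorem exists_maxSep (M : Set G) (h1 : (1 : G) ∈ M) (hM : ∀ m ∈ M, m⁻¹ ∈ M) (S0 : Set G)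
    (h0 : Sep M S0) : ∃ S, S0 ⊆ S ∧ MaxSep M S := by
  obtain ⟨S, hS, hi, hm⟩ := exists_max_indep (fun s t : G => s ≠ t ∧ s * t⁻¹ ∈ M)
    (fun x y h => ⟨h.1.symm, by simpa using hM _ h.2⟩) (fun x h => h.1 rfl) S0
    (fun x hx y hy h => h.1 (h0 x hx y hy h.2))
  refine ⟨S, hS, ?_, ?_⟩
  · intro s hs t ht hst
    by_contra hne
    exact hi s hs t ht ⟨hne, hst⟩
  · intro g
    by_cases hg : g ∈ S
    · exact ⟨g, hg, by simpa using h1⟩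
    · obtain ⟨s, hs, h⟩ := hm g hg
      exact ⟨s, hs, h.2⟩

theorem color_extend (γ : G) (hγ : γ ≠ 1) (A : Set G) (v : G → Fin 3)
    (hv : ∀ h ∈ A, γ * h ∈ A → v (γ * h) ≠ v h) :
    ∃ c : G → Fin 3, (∀ h, c (γ * h) ≠ c h) ∧ ∀ a ∈ A, c a = v a := by
  obtain ⟨S, hS0, hi, hm⟩ := exists_max_indep
    (fun s t : G × Fin 3 => (s.1 = t.1 ∧ s.2 ≠ t.2) ∨ (s.2 = t.2 ∧ (t.1 = γ * s.1 ∨ s.1 = γ * t.1)))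
    (by
      rintro x y (⟨h1, h2⟩ | ⟨h1, h2⟩)
      · exact Or.inl ⟨h1.symm, h2.symm⟩
      · exact Or.inr ⟨h1.symm, h2.symm⟩)
    (by
      rintro x (⟨h1, h2⟩ | ⟨h1, h2⟩)
      · exact h2 rfl
      · rcases h2 with h2 | h2 <;> exact hγ (by simpa using h2))
    {s | s.1 ∈ A ∧ s.2 = v s.1} (by
      rintro ⟨x, i⟩ ⟨hx, hi⟩ ⟨y, j⟩ ⟨hy, hj⟩ (⟨h1, h2⟩ | ⟨h1, h2⟩)
      · simp only at *; subst h1; exact h2 (hi.trans hj.symm)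
      · simp only at *
        rcases h2 with h2 | h2
        · subst h2; exact hv x hx hy (by rw [← hi, ← hj, h1])
        · subst h2; exact hv y hy hx (by rw [← hi, ← hj, h1]))
  have huniq : ∀ h i j, (h, i) ∈ S → (h, j) ∈ S → i = j := by
    intro h i j h1 h2
    by_contra hne
    exact hi _ h1 _ h2 (Or.inl ⟨rfl, hne⟩)
  have hex : ∀ h, ∃ i, (h, i) ∈ S := by
    intro h
    by_contra hcon
    push Not at hcon
    have key : ∀ i, (γ * h, i) ∈ S ∨ (γ⁻¹ * h, i) ∈ S := by
      intro i
      obtain ⟨⟨x, j⟩, hs, h'⟩ := hm (h, i) (hcon i)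
      simp only at h'
      rcases h' with ⟨h1, h2⟩ | ⟨h1, h2⟩
      · subst h1; exact absurd hs (hcon j)
      · subst h1
        rcases h2 with h2 | h2
        · right; rw [h2]; simpa using hs
        · left; rw [← h2]; exact hs
    have u1 := huniq (γ * h)
    have u2 := huniq (γ⁻¹ * h)
    have k0 := key 0
    have k1 := key 1
    have k2 := key 2
    have n01 : (0 : Fin 3) ≠ 1 := by decide
    have n02 : (0 : Fin 3) ≠ 2 := by decide
    have n12 : (1 : Fin 3) ≠ 2 := by decide
    rcases k0 with k0 | k0 <;> rcases k1 with k1 | k1 <;> rcases k2 with k2 | k2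
    · exact n01 (u1 _ _ k0 k1)
    · exact n01 (u1 _ _ k0 k1)
    · exact n02 (u1 _ _ k0 k2)
    · exact n12 (u2 _ _ k1 k2)
    · exact n12 (u1 _ _ k1 k2)
    · exact n02 (u2 _ _ k0 k2)
    · exact n01 (u2 _ _ k0 k1)
    · exact n01 (u2 _ _ k0 k1)
  choose c hc using hex
  refine ⟨c, ?_, ?_⟩
  · intro h heq
    have h1 := hc (γ * h)
    rw [heq] at h1
    exact hi _ (hc h) _ h1 (Or.inr ⟨rfl, Or.inl rfl⟩)
  · intro a ha
    exact huniq a _ _ (hc a) (hS0 ⟨ha, rfl⟩)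

/-- the configuration space -/
abbrev Om (G : Type*) := G → G → Fin 3

def sh (g : G) (x : Om G) : Om G := fun h => x (h * g)

def X0 (G : Type*) [Group G] : Set (Om G) := {x | ∀ γ : G, γ ≠ 1 → ∀ h, x (γ * h) γ ≠ x h γ}

def FlexAt (J D : Set G) (X : Set (Om G)) : Prop :=
  ∀ (A : Set G) (ξ : G → Om G), (∀ a ∈ A, ξ a ∈ X) →
    (∀ a ∈ A, ∀ b ∈ A, a * b⁻¹ ∈ D → ξ a = ξ b) →
    ∃ z ∈ X, ∀ a ∈ A, ∀ γ ∈ J, z a γ = ξ a a γ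

structure SIat (J : Set G) (X : Set (Om G)) : Prop where
  closed : IsClosed X
  inv : ∀ g, ∀ x ∈ X, sh g x ∈ X
  sub : X ⊆ X0 G
  det : ∀ x ∈ X, ∀ y ∈ X0 G, (∀ h, ∀ γ ∈ J, y h γ = x h γ) → y ∈ X
  flex : ∃ D : Set G, D.Finite ∧ FlexAt J D X

theorem FlexAt.mono {J D D' : Set G} {X : Set (Om G)} (h : FlexAt J D X) (hD : D ⊆ D') :
    FlexAt J D' X := fun A ξ h1 h2 => h A ξ h1 fun a ha b hb hab => h2 a ha b hb (hD hab)

theorem siat_X0 : SIat (∅ : Set G) (X0 G) where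
  closed := by
    have : X0 G = ⋂ (γ : G) (_ : γ ≠ 1) (h : G), {x : Om G | x (γ * h) γ ≠ x h γ} := by
      ext x; simp [X0]
    rw [this]
    refine isClosed_iInter fun γ => isClosed_iInter fun _ => isClosed_iInter fun h => ?_
    have hc : Continuous fun x : Om G => (x (γ * h) γ, x h γ) := by fun_prop
    exact (isClosed_discrete {p : Fin 3 × Fin 3 | p.1 ≠ p.2}).preimage hc
  inv := by
    intro g x hx γ hγ h
    have := hx γ hγ (h * g)
    simpa [sh, mul_assoc] using this
  sub := subset_rfl
  det := fun _ _ y hy _ => hy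
  flex := by
    refine ⟨∅, Set.finite_empty, fun A ξ _ _ => ?_⟩
    have : ∀ γ : G, ∃ c : G → Fin 3, γ ≠ 1 → ∀ h, c (γ * h) ≠ c h := by
      intro γ
      by_cases hγ : γ = 1
      · exact ⟨fun _ => 0, fun h => absurd hγ h⟩
      · obtain ⟨c, hc, -⟩ := color_extend γ hγ ∅ (fun _ => 0) (by simp)
        exact ⟨c, fun _ => hc⟩
    choose c hc using this
    exact ⟨fun h γ => c γ h, fun γ hγ h => hc γ hγ h, by simp⟩

theorem SIat.upgrade {J J' : Set G} {X : Set (Om G)} (h : SIat J X) (hJ : J ⊆ J')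
    (hJ' : J'.Finite) : SIat J' X where
  closed := h.closed
  inv := h.inv
  sub := h.sub
  det := fun x hx y hy hh => h.det x hx y hy fun k γ hγ => hh k γ (hJ hγ)
  flex := by
    classical
    obtain ⟨D, hD, hfl⟩ := h.flex
    refine ⟨D ∪ J', hD.union hJ', fun A ξ hA hc => ?_⟩
    obtain ⟨z, hz, hzA⟩ := hfl A ξ hA fun a ha b hb hab => hc a ha b hb (Or.inl hab)
    have : ∀ γ : G, ∃ c : G → Fin 3, γ ∈ J' → (γ ≠ 1 → ∀ h, c (γ * h) ≠ c h) ∧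
        ∀ a ∈ A, c a = ξ a a γ := by
      intro γ
      by_cases hγ : γ = 1
      · exact ⟨fun a => ξ a a γ, fun _ => ⟨fun h => absurd hγ h, fun _ _ => rfl⟩⟩
      by_cases hγJ : γ ∈ J'
      · obtain ⟨c, hc1, hc2⟩ := color_extend γ hγ A (fun a => ξ a a γ) (by
          intro a ha hγa
          have e := hc _ hγa _ ha (Or.inr (by simpa using hγJ))
          rw [e]
          exact h.sub (hA a ha) γ hγ a)
        exact ⟨c, fun _ => ⟨fun _ => hc1, hc2⟩⟩
      · exact ⟨fun _ => 0, fun h => absurd h hγJ⟩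
    choose c hc using this
    refine ⟨fun k γ => if γ ∈ J then z k γ else if γ ∈ J' then c γ k else z k γ, ?_, ?_⟩
    · refine h.det z hz _ ?_ (fun k γ hγ => by simp [hγ])
      intro γ hγ k
      by_cases h1 : γ ∈ J
      · simpa [h1] using h.sub hz γ hγ k
      · by_cases h2 : γ ∈ J'
        · simpa [h1, h2] using (hc γ h2).1 hγ k
        · simpa [h1, h2] using h.sub hz γ hγ k
    · intro a ha γ hγ
      by_cases h1 : γ ∈ J
      · simpa [h1] using hzA a ha γ h1
      · simpa [h1, hγ] using (hc γ hγ).2 a ha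

def plant (X : Set (Om G)) (J W B M : Set G) (p : Om G) : Set (Om G) :=
  {x | x ∈ X ∧ ∃ S, MaxSep M S ∧ ∀ s ∈ S, ∀ b ∈ B, ∀ w ∈ W, ∀ γ ∈ J, x (w * (b * s)) γ = p w γ}

theorem plant_closed {X : Set (Om G)} (hX : IsClosed X) (J W B M : Set G) (hM : M.Finite)
    (p : Om G) : IsClosed (plant X J W B M p) := by
  have key : plant X J W B M p = Prod.fst '' {q : Om G × (G → Bool) | q.1 ∈ X ∧
      (∀ s t : G, s * t⁻¹ ∈ M → s ≠ t → (q.2 s = false ∨ q.2 t = false)) ∧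
      (∀ g, ∃ m ∈ M, q.2 (m * g) = true) ∧
      (∀ s b w γ : G, b ∈ B → w ∈ W → γ ∈ J → (q.2 s = false ∨ q.1 (w * (b * s)) γ = p w γ))} := by
    ext x
    constructor
    · rintro ⟨hx, S, hS, hp⟩
      classical
      refine ⟨(x, fun s => decide (s ∈ S)), ⟨hx, ?_, ?_, ?_⟩, rfl⟩
      · intro s t hst hne
        by_contra hcon
        simp only [decide_eq_false_iff_not, not_or, not_not] at hcon
        exact hne (hS.1 s hcon.1 t hcon.2 hst)
      · intro g
        obtain ⟨s, hs, hm⟩ := hS.2 g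
        exact ⟨_, hm, by simpa using hs⟩
      · intro s b w γ hb hw hγ
        by_cases hs : s ∈ S
        · right; exact hp s hs b hb w hw γ hγ
        · left; simpa using hs
    · rintro ⟨⟨x, S⟩, ⟨hx, h1, h2, h3⟩, rfl⟩
      refine ⟨hx, {s | S s = true}, ⟨?_, ?_⟩, ?_⟩
      · intro s hs t ht hst
        by_contra hne
        rcases h1 s t hst hne with h | h
        · exact Bool.false_ne_true (h.symm.trans hs)
        · exact Bool.false_ne_true (h.symm.trans ht)
      · intro g
        obtain ⟨m, hm, hS⟩ := h2 g
        exact ⟨m * g, hS, by simpa using hm⟩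
      · intro s hs b hb w hw γ hγ
        rcases h3 s b w γ hb hw hγ with h | h
        · exact absurd (h.symm.trans hs) Bool.false_ne_true
        · exact h
  rw [key]
  apply isClosedMap_fst_of_compactSpace
  have c1 : ∀ s : G, Continuous fun q : Om G × (G → Bool) => q.2 s := by intro s; fun_prop
  have c2 : ∀ k γ : G, Continuous fun q : Om G × (G → Bool) => q.1 k γ := by intro s γ; fun_prop
  have e1 : ∀ (s : G) (b : Bool), IsClosed {q : Om G × (G → Bool) | q.2 s = b} := fun s b =>
    (isClosed_discrete {b}).preimage (c1 s)
  have e2 : ∀ (k γ : G) (b : Fin 3), IsClosed {q : Om G × (G → Bool) | q.1 k γ = b} := fun s γ b =>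
    (isClosed_discrete {b}).preimage (c2 s γ)
  refine (hX.preimage continuous_fst).and (IsClosed.and ?_ (IsClosed.and ?_ ?_))
  · simp only [Set.ofPred_forall]
    exact isClosed_iInter fun s => isClosed_iInter fun t => isClosed_iInter fun _ =>
      isClosed_iInter fun _ => (e1 s false).union (e1 t false)
  · simp only [Set.ofPred_forall]
    refine isClosed_iInter fun g => ?_
    have : {q : Om G × (G → Bool) | ∃ m ∈ M, q.2 (m * g) = true} =
        ⋃ m ∈ M, {q : Om G × (G → Bool) | q.2 (m * g) = true} := by ext q; simp
    rw [this]
    exact hM.isClosed_biUnion fun m _ => e1 _ _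
  · simp only [Set.ofPred_forall]
    exact isClosed_iInter fun s => isClosed_iInter fun t => isClosed_iInter fun _ =>
      isClosed_iInter fun _ => isClosed_iInter fun _ => isClosed_iInter fun _ =>
      isClosed_iInter fun _ => (e1 s false).union (e2 _ _ _)

theorem plant_flex {X : Set (Om G)} {J : Set G} (hX : SIat J X) (D W B E : Set G)
    (hDf : D.Finite) (hWf : W.Finite) (hBf : B.Finite) (hEf : E.Finite) (hBn : B.Nonempty)
    (hfl : FlexAt J D X) (hD1 : (1 : G) ∈ D) (hDi : ∀ d ∈ D, d⁻¹ ∈ D)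
    (hE1 : (1 : G) ∈ E) (hEi : ∀ e ∈ E, e⁻¹ ∈ E)
    (hE : ∀ w ∈ W, ∀ d ∈ D, ∀ w' ∈ W, w⁻¹ * d * w' ∈ E) (hB : Sep E B)
    (p : Om G) (hp : p ∈ X) :
    ∃ D' : Set G, D'.Finite ∧ FlexAt J D' (plant X J W B (B⁻¹ * E * B) p) := by
  classical
  set M := B⁻¹ * E * B with hMdef
  have hMf : M.Finite := (hBf.inv.mul hEf).mul hBf
  have hMmem : ∀ b ∈ B, ∀ e ∈ E, ∀ b' ∈ B, b⁻¹ * e * b' ∈ M := fun b hb e he b' hb' =>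
    Set.mul_mem_mul (Set.mul_mem_mul (by simpa using hb) he) hb'
  have hM1 : (1 : G) ∈ M := by
    obtain ⟨b, hb⟩ := hBn
    simpa using hMmem b hb 1 hE1 b hb
  have hMi : ∀ m ∈ M, m⁻¹ ∈ M := by
    rintro _ ⟨_, ⟨b, hb, e, he, rfl⟩, b', hb', rfl⟩
    have := hMmem b' hb' e⁻¹ (hEi e he) b⁻¹ (by simpa using hb)
    convert this using 1
    group
  set N := W⁻¹ * D with hN
  set L0 := B⁻¹ * N with hL0
  set L := L0 ∪ M * L0 with hL
  have hNf : N.Finite := hWf.inv.mul hDf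
  have hL0f : L0.Finite := hBf.inv.mul hNf
  have hLf : L.Finite := hL0f.union (hMf.mul hL0f)
  refine ⟨D ∪ (L⁻¹ * M * L ∪ N⁻¹ * N),
    hDf.union (((hLf.inv.mul hMf).mul hLf).union (hNf.inv.mul hNf)), fun A ξ hA hc => ?_⟩
  have hcN : ∀ t, ∀ a ∈ A, ∀ b ∈ A, t * a⁻¹ ∈ N → t * b⁻¹ ∈ N → ξ a = ξ b := by
    intro t a ha b hb h1 h2
    refine hc a ha b hb (Or.inr (Or.inr ⟨(t * a⁻¹)⁻¹, by simpa using h1, _, h2, by group⟩))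
  -- choose the witness depending on the configuration only
  have hσ' : ∃ σ : Om G → Set G, ∀ a ∈ A, MaxSep M (σ (ξ a)) ∧ ∀ s ∈ σ (ξ a), ∀ b ∈ B, ∀ w ∈ W,
      ∀ γ ∈ J, ξ a (w * (b * s)) γ = p w γ := by
    have : ∀ x : Om G, ∃ S, x ∈ plant X J W B M p → MaxSep M S ∧ ∀ s ∈ S, ∀ b ∈ B, ∀ w ∈ W,
        ∀ γ ∈ J, x (w * (b * s)) γ = p w γ := by
      intro x
      by_cases hx : x ∈ plant X J W B M p
      · obtain ⟨S, hS⟩ := hx.2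
        exact ⟨S, fun _ => hS⟩
      · exact ⟨∅, fun h => absurd h hx⟩
    choose σ hσ using this
    exact ⟨σ, fun a ha => hσ _ (hA a ha)⟩
  obtain ⟨σ, hσ⟩ := hσ'
  obtain ⟨S, hS0, hS⟩ := exists_maxSep M hM1 hMi {s | ∃ a ∈ A, s * a⁻¹ ∈ L ∧ s ∈ σ (ξ a)} (by
    rintro s ⟨a, ha, hsa, hs⟩ t ⟨b, hb, htb, ht⟩ hst
    have e : ξ a = ξ b := by
      refine hc a ha b hb (Or.inr (Or.inl ⟨(s * a⁻¹)⁻¹ * (s * t⁻¹),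
        ⟨(s * a⁻¹)⁻¹, by simpa using hsa, _, hst, rfl⟩, _, htb, by group⟩))
    rw [← e] at ht
    exact (hσ a ha).1.1 s hs t ht hst)
  have claim : ∀ s ∈ S, ∀ a ∈ A, s * a⁻¹ ∈ L0 → s ∈ σ (ξ a) := by
    intro s hs a ha hsa
    obtain ⟨s', hs', hm⟩ := (hσ a ha).1.2 s
    have h1 : s' ∈ S := hS0 ⟨a, ha, Or.inr ⟨_, hm, _, hsa, by group⟩, hs'⟩
    have := hS.1 s' h1 s hs hm
    rwa [← this]
  set T : Set G := {t | ∃ b ∈ B, ∃ s ∈ S, t = b * s} with hT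
  have hTsep : ∀ t ∈ T, ∀ t' ∈ T, t * t'⁻¹ ∈ E → t = t' := by
    rintro _ ⟨b, hb, s, hs, rfl⟩ _ ⟨b', hb', s', hs', rfl⟩ he
    have e1 : s = s' := by
      apply hS.1 s hs s' hs'
      have := hMmem b hb _ he b' hb'
      convert this using 1
      group
    subst e1
    rw [hB b hb b' hb' (by convert he using 1; group)]
  have hlab : ∀ t, ∃ l : Om G, l ∈ X ∧ (∀ a ∈ A, t * a⁻¹ ∈ N → l = ξ a) ∧
      ((∃ a ∈ A, t * a⁻¹ ∈ N) ∨ l = sh t⁻¹ p) := by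
    intro t
    by_cases h : ∃ a ∈ A, t * a⁻¹ ∈ N
    · obtain ⟨a, ha, hta⟩ := h
      exact ⟨ξ a, (hA a ha).1, fun b hb htb => hcN t a ha b hb hta htb, Or.inl ⟨a, ha, hta⟩⟩
    · exact ⟨sh t⁻¹ p, hX.inv _ _ hp, fun a ha hta => absurd ⟨a, ha, hta⟩ h, Or.inr rfl⟩
  choose lab labX labA labF using hlab
  have hξ' : ∀ h, ∃ l : Om G, l ∈ X ∧ (h ∈ A → l = ξ h) ∧
      (∀ t ∈ T, ∀ w ∈ W, h = w * t → l = lab t) := by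
    intro h
    by_cases hA' : h ∈ A
    · refine ⟨ξ h, (hA h hA').1, fun _ => rfl, ?_⟩
      rintro t ht w hw rfl
      refine (labA t _ hA' ⟨w⁻¹, by simpa using hw, 1, hD1, by group⟩).symm
    · by_cases hT' : ∃ t ∈ T, ∃ w ∈ W, h = w * t
      · obtain ⟨t, ht, w, hw, rfl⟩ := hT'
        refine ⟨lab t, labX t, fun h => absurd h hA', ?_⟩
        intro t' ht' w' hw' e
        rw [hTsep t ht t' ht' ?_]
        have := hE w hw 1 hD1 w' hw'
        convert this using 1
        rw [mul_one, mul_inv_eq_iff_eq_mul, mul_assoc, ← e]; group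
      · exact ⟨p, hp, fun h => absurd h hA', fun t ht w hw e => absurd ⟨t, ht, w, hw, e⟩ hT'⟩
  choose ξ' ξX ξA ξT using hξ'
  obtain ⟨z, hz, hzA⟩ := hfl (A ∪ {h | ∃ t ∈ T, ∃ w ∈ W, h = w * t}) ξ' (fun a _ => ξX a) (by
    rintro h (hh | ⟨t, ht, w, hw, rfl⟩) h' (hh' | ⟨t', ht', w', hw', rfl⟩) hd
    · rw [ξA _ hh, ξA _ hh']; exact hc _ hh _ hh' (Or.inl hd)
    · rw [ξA _ hh, ξT _ t' ht' w' hw' rfl]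
      refine (labA t' _ hh ⟨w'⁻¹, by simpa using hw', (h * (w' * t')⁻¹)⁻¹, hDi _ hd, by group⟩).symm
    · rw [ξA _ hh', ξT _ t ht w hw rfl]
      exact labA t _ hh' ⟨w⁻¹, by simpa using hw, _, hd, by group⟩
    · rw [ξT _ t ht w hw rfl, ξT _ t' ht' w' hw' rfl]
      rw [hTsep t ht t' ht' (by convert hE w hw _ hd w' hw' using 1; group)])
  refine ⟨z, ⟨hz, S, hS, ?_⟩, ?_⟩
  · intro s hs b hb w hw γ hγ
    have ht : b * s ∈ T := ⟨b, hb, s, hs, rfl⟩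
    rw [hzA _ (Or.inr ⟨_, ht, w, hw, rfl⟩) γ hγ, ξT _ _ ht w hw rfl]
    rcases labF (b * s) with ⟨a, ha, hta⟩ | h
    · rw [labA _ a ha hta]
      refine (hσ a ha).2 s (claim s hs a ha ⟨b⁻¹, by simpa using hb, _, hta, by group⟩) b hb w hw γ hγ
    · rw [h]
      show p (w * (b * s) * (b * s)⁻¹) γ = p w γ
      rw [mul_inv_cancel_right]
  · intro a ha γ hγ
    rw [hzA a (Or.inl ha) γ hγ, ξA a ha]

theorem plant_siat {X : Set (Om G)} {J : Set G} (hX : SIat J X) (D W B E : Set G)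
    (hDf : D.Finite) (hWf : W.Finite) (hBf : B.Finite) (hEf : E.Finite) (hBn : B.Nonempty)
    (hfl : FlexAt J D X) (hD1 : (1 : G) ∈ D) (hDi : ∀ d ∈ D, d⁻¹ ∈ D)
    (hE1 : (1 : G) ∈ E) (hEi : ∀ e ∈ E, e⁻¹ ∈ E)
    (hE : ∀ w ∈ W, ∀ d ∈ D, ∀ w' ∈ W, w⁻¹ * d * w' ∈ E) (hB : Sep E B)
    (p : Om G) (hp : p ∈ X) : SIat J (plant X J W B (B⁻¹ * E * B) p) where
  closed := plant_closed hX.closed _ _ _ _ ((hBf.inv.mul hEf).mul hBf) _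
  inv := by
    rintro g x ⟨hx, S, hS, h⟩
    refine ⟨hX.inv g x hx, _, hS.translate g, ?_⟩
    intro s hs b hb w hw γ hγ
    have := h _ hs b hb w hw γ hγ
    simpa [sh, mul_assoc] using this
  sub := fun x hx => hX.sub hx.1
  det := by
    rintro x ⟨hx, S, hS, h⟩ y hy hxy
    refine ⟨hX.det x hx y hy hxy, S, hS, ?_⟩
    intro s hs b hb w hw γ hγ
    rw [hxy _ γ hγ, h s hs b hb w hw γ hγ]
  flex := plant_flex hX D W B E hDf hWf hBf hEf hBn hfl hD1 hDi hE1 hEi hE hB p hp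


def SI (X : Set (Om G)) : Prop := ∃ J : Set G, J.Finite ∧ SIat J X

theorem single [Infinite G] {ι : Type*} [Finite ι] (X : ι → Set (Om G)) (hX : ∀ i, SI (X i))
    (u : ι → Om G) (hu : ∀ i, u i ∈ X i) (W : Set G) (hW : W.Finite) :
    ∃ X' : ι → Set (Om G), (∀ i, SI (X' i)) ∧ (∀ i, X' i ⊆ X i) ∧
      ∀ y : ι → Om G, (∀ i, y i ∈ X' i) → ∃ g : G, ∀ i, ∀ w ∈ W, ∀ γ ∈ W,
        y i (w * g) γ = u i w γ := by
  classical
  have := Fintype.ofFinite ι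
  choose J₀ hJ₀ hX₀ using hX
  set J : Set G := (⋃ i, J₀ i) ∪ W with hJ
  have hJf : J.Finite := (Set.finite_iUnion hJ₀).union hW
  have hXJ : ∀ i, SIat J (X i) := fun i =>
    (hX₀ i).upgrade (fun x hx => Or.inl (Set.mem_iUnion.2 ⟨i, hx⟩)) hJf
  choose D₀ hD₀ hfl₀ using fun i => (hXJ i).flex
  set D : Set G := ((⋃ i, D₀ i) ∪ (⋃ i, D₀ i)⁻¹) ∪ {1} with hD
  have hDf : D.Finite := ((Set.finite_iUnion hD₀).union (Set.finite_iUnion hD₀).inv).union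
    (Set.finite_singleton 1)
  have hD1 : (1 : G) ∈ D := Or.inr rfl
  have hDi : ∀ d ∈ D, d⁻¹ ∈ D := by
    rintro d ((h | h) | h)
    · exact Or.inl (Or.inr (by rw [Set.mem_inv, inv_inv]; exact h))
    · exact Or.inl (Or.inl h)
    · exact Or.inr (by rw [Set.mem_singleton_iff] at h ⊢; simp [h])
  have hfl : ∀ i, FlexAt J D (X i) := fun i =>
    (hfl₀ i).mono fun x hx => Or.inl (Or.inl (Set.mem_iUnion.2 ⟨i, hx⟩))
  set E : Set G := W⁻¹ * D * W ∪ {1} with hE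
  have hEf : E.Finite := ((hW.inv.mul hDf).mul hW).union (Set.finite_singleton 1)
  have hE1 : (1 : G) ∈ E := Or.inr rfl
  have hEm : ∀ w ∈ W, ∀ d ∈ D, ∀ w' ∈ W, w⁻¹ * d * w' ∈ E := fun w hw d hd w' hw' =>
    Or.inl (Set.mul_mem_mul (Set.mul_mem_mul (by simpa using hw) hd) hw')
  have hEi : ∀ e ∈ E, e⁻¹ ∈ E := by
    rintro e (⟨_, ⟨w, hw, d, hd, rfl⟩, w', hw', rfl⟩ | h)
    · have := hEm w' hw' d⁻¹ (hDi d hd) w⁻¹ (by simpa using hw)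
      convert this using 1
      group
    · exact Or.inr (by rw [Set.mem_singleton_iff] at h ⊢; simp [h])
  obtain ⟨B, Q, -, -, -, hB, hQ⟩ := multi E hEf hE1 (Finset.univ : Finset ι)
  have hB' := fun i => hB i (Finset.mem_univ i)
  refine ⟨fun i => plant (X i) J W (B i) ((B i)⁻¹ * E * B i) (u i), fun i => ⟨J, hJf, ?_⟩,
    fun i x hx => hx.1, ?_⟩
  · exact plant_siat (hXJ i) D W (B i) E hDf hW (hB' i).1 hEf (hB' i).2.1 (hfl i) hD1 hDi hE1 hEi
      hEm (hB' i).2.2 (u i) (hu i)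
  · intro y hy
    choose S hS hyS using fun i => (hy i).2
    obtain ⟨q, -, hq⟩ := hQ S fun i _ => hS i
    refine ⟨q, fun i w hw γ hγ => ?_⟩
    obtain ⟨b, hb, s, hs, rfl⟩ := hq i (Finset.mem_univ i)
    exact hyS i s hs b hb w hw γ (Or.inr hγ)

/-- pattern on the window -/
def pat (W : Set G) (x : Om G) : W → W → Fin 3 := fun w γ => x w γ

theorem stage_aux [Infinite G] {ι : Type*} [Finite ι] (W : Set G) (hW : W.Finite)
    (P : Finset (ι → W → W → Fin 3)) (X : ι → Set (Om G)) (hX : ∀ i, SI (X i)) :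
    ∃ X' : ι → Set (Om G), (∀ i, SI (X' i)) ∧ (∀ i, X' i ⊆ X i) ∧
      ∀ u y : ι → Om G, (∀ i, u i ∈ X' i) → (∀ i, y i ∈ X' i) → (fun i => pat W (u i)) ∈ P →
        ∃ g : G, ∀ i, ∀ w ∈ W, ∀ γ ∈ W, y i (w * g) γ = u i w γ := by
  classical
  induction P using Finset.induction_on with
  | empty => exact ⟨X, hX, fun _ => subset_rfl, by simp⟩
  | insert π P _ ih =>
    obtain ⟨X₁, h1, h2, h3⟩ := ih
    by_cases hπ : ∃ u : ι → Om G, (∀ i, u i ∈ X₁ i) ∧ (fun i => pat W (u i)) = π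
    · obtain ⟨u₀, hu₀, hπ⟩ := hπ
      obtain ⟨X₂, k1, k2, k3⟩ := single X₁ h1 u₀ hu₀ W hW
      refine ⟨X₂, k1, fun i => (k2 i).trans (h2 i), fun u y hu hy hm => ?_⟩
      rcases Finset.mem_insert.1 hm with h | h
      · obtain ⟨g, hg⟩ := k3 y hy
        refine ⟨g, fun i w hw γ hγ => ?_⟩
        rw [hg i w hw γ hγ]
        have := congrFun (congrFun (congrFun (hπ.trans h.symm) i) ⟨w, hw⟩) ⟨γ, hγ⟩
        exact this
      · exact h3 u y (fun i => k2 i (hu i)) (fun i => k2 i (hy i)) h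
    · refine ⟨X₁, h1, h2, fun u y hu hy hm => ?_⟩
      rcases Finset.mem_insert.1 hm with h | h
      · exact absurd ⟨u, hu, h⟩ hπ
      · exact h3 u y hu hy h

theorem stage [Infinite G] {ι : Type*} [Finite ι] (W : Set G) (hW : W.Finite)
    (X : ι → Set (Om G)) (hX : ∀ i, SI (X i)) :
    ∃ X' : ι → Set (Om G), (∀ i, SI (X' i)) ∧ (∀ i, X' i ⊆ X i) ∧
      ∀ u y : ι → Om G, (∀ i, u i ∈ X' i) → (∀ i, y i ∈ X' i) →
        ∃ g : G, ∀ i, ∀ w ∈ W, ∀ γ ∈ W, y i (w * g) γ = u i w γ := by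
  classical
  have : Finite W := hW
  have := Fintype.ofFinite (ι → W → W → Fin 3)
  obtain ⟨X', h1, h2, h3⟩ := stage_aux W hW Finset.univ X hX
  exact ⟨X', h1, h2, fun u y hu hy => h3 u y hu hy (Finset.mem_univ _)⟩

/-- truncation -/
def rr (n : ℕ) (α : Set ℕ) : Set ℕ := α ∩ {k | k < n}

theorem rr_rr {n m : ℕ} (h : n ≤ m) (α : Set ℕ) : rr n (rr m α) = rr n α := by
  ext k
  simp only [rr, Set.mem_inter_iff, Set.mem_ofPred_eq]
  constructor
  · rintro ⟨⟨a, b⟩, c⟩; exact ⟨a, c⟩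
  · rintro ⟨a, c⟩; exact ⟨⟨a, by omega⟩, c⟩

theorem rr_range_finite (n : ℕ) : (Set.range (rr n)).Finite := by
  apply (Set.finite_lt_nat n).finite_subsets.subset
  rintro _ ⟨α, rfl⟩
  exact Set.inter_subset_right

def Good (n : ℕ) (X : Set ℕ → Set (Om G)) : Prop :=
  (∀ α, SI (X α)) ∧ ∀ α, X (rr n α) = X α

def Star (n : ℕ) (W : Set G) (X : Set ℕ → Set (Om G)) : Prop :=
  ∀ u y : Set ℕ → Om G, (∀ α, u α ∈ X α) → (∀ α, y α ∈ X α) →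
    ∃ g : G, ∀ α ∈ Set.range (rr n), ∀ w ∈ W, ∀ γ ∈ W, y α (w * g) γ = u α w γ

theorem next [Infinite G] (n : ℕ) (W : Set G) (hW : W.Finite) (X : Set ℕ → Set (Om G))
    (hX : Good n X) : ∃ X' : Set ℕ → Set (Om G), Good (n + 1) X' ∧ (∀ α, X' α ⊆ X α) ∧
      Star (n + 1) W X' := by
  have : Finite (Set.range (rr (n + 1))) := rr_range_finite (n + 1)
  obtain ⟨X', h1, h2, h3⟩ := stage W hW (fun i : Set.range (rr (n + 1)) => X i) fun i => hX.1 _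
  refine ⟨fun α => X' ⟨rr (n + 1) α, α, rfl⟩, ⟨fun α => h1 _, fun α => ?_⟩, fun α => ?_, ?_⟩
  · have : rr (n + 1) (rr (n + 1) α) = rr (n + 1) α := rr_rr le_rfl α
    simp only [this]
  · refine (h2 _).trans ?_
    show X (rr (n + 1) α) ⊆ X α
    rw [← hX.2 (rr (n + 1) α), rr_rr (Nat.le_succ n), hX.2]
  · intro u y hu hy
    have e : ∀ i : Set.range (rr (n + 1)), (⟨rr (n + 1) i, i, rfl⟩ : Set.range (rr (n + 1))) = i := by
      rintro ⟨_, α, rfl⟩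
      exact Subtype.ext (rr_rr le_rfl α)
    obtain ⟨g, hg⟩ := h3 (fun i => u i) (fun i => y i) (fun i => by simpa [e i] using hu i)
      (fun i => by simpa [e i] using hy i)
    exact ⟨g, fun α hα => hg ⟨α, hα⟩⟩

theorem exists_seq [Infinite G] (W : ℕ → Set G) (hW : ∀ n, (W n).Finite) :
    ∃ X : ℕ → Set ℕ → Set (Om G), (∀ n, Good n (X n)) ∧ (∀ n α, X (n + 1) α ⊆ X n α) ∧
      ∀ n, Star (n + 1) (W n) (X (n + 1)) := by
  choose F hF1 hF2 hF3 using fun (n : ℕ) (X : Set ℕ → Set (Om G)) (hX : Good n X) =>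
    next n (W n) (hW n) X hX
  let T : (n : ℕ) → {X : Set ℕ → Set (Om G) // Good n X} := fun n =>
    Nat.rec ⟨fun _ => X0 G, fun _ => ⟨∅, Set.finite_empty, siat_X0⟩, fun _ => rfl⟩
      (fun n X => ⟨F n X.1 X.2, hF1 n X.1 X.2⟩) n
  exact ⟨fun n => (T n).1, fun n => (T n).2, fun n α => hF2 n (T n).1 (T n).2 α,
    fun n => hF3 n (T n).1 (T n).2⟩

theorem SI.nonempty {X : Set (Om G)} (h : SI X) : X.Nonempty := by
  obtain ⟨J, -, h⟩ := h
  obtain ⟨D, -, hfl⟩ := h.flex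
  obtain ⟨z, hz, -⟩ := hfl ∅ (fun _ _ _ => 0) (by simp) (by simp)
  exact ⟨z, hz⟩

theorem main [Infinite G] [Countable G] : ∃ Y : Set ℕ → Set (Om G),
    (∀ α, IsClosed (Y α)) ∧ (∀ α, (Y α).Nonempty) ∧ (∀ α, ∀ g, ∀ x ∈ Y α, sh g x ∈ Y α) ∧
    (∀ α, Y α ⊆ X0 G) ∧
    ∀ (s : Finset (Set ℕ)) (W : Set G), W.Finite → ∀ u y : Set ℕ → Om G,
      (∀ α ∈ s, u α ∈ Y α) → (∀ α ∈ s, y α ∈ Y α) →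
      ∃ g : G, ∀ α ∈ s, ∀ w ∈ W, ∀ γ ∈ W, y α (w * g) γ = u α w γ := by
  classical
  obtain ⟨f, hf⟩ := exists_injective_nat G
  obtain ⟨X, hX, hmono, hstar⟩ := exists_seq (fun n => {g : G | f g < n})
    (fun n => Set.Finite.preimage hf.injOn (Set.finite_lt_nat n))
  have hcl : ∀ n α, IsClosed (X n α) := fun n α => by
    obtain ⟨J, -, h⟩ := (hX n).1 α
    exact h.closed
  refine ⟨fun α => ⋂ n, X n α, fun α => isClosed_iInter fun n => hcl n α, fun α => ?_, ?_, ?_, ?_⟩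
  · exact IsCompact.nonempty_iInter_of_sequence_nonempty_isCompact_isClosed _ (fun n => hmono n α)
      (fun n => ((hX n).1 α).nonempty) (hcl 0 α).isCompact (fun n => hcl n α)
  · intro α g x hx
    refine Set.mem_iInter.2 fun n => ?_
    obtain ⟨J, -, h⟩ := (hX n).1 α
    exact h.inv g x (Set.mem_iInter.1 hx n)
  · intro α x hx
    obtain ⟨J, -, h⟩ := (hX 0).1 α
    exact h.sub (Set.mem_iInter.1 hx 0)
  · intro s W hW u y hu hy
    -- a level past which the window is covered
    obtain ⟨N1, hN1⟩ : ∃ N, ∀ w ∈ W, f w < N := by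
      obtain ⟨N, hN⟩ := (hW.image f).bddAbove
      exact ⟨N + 1, fun w hw => Nat.lt_succ_of_le (hN ⟨w, hw, rfl⟩)⟩
    have hsep : ∀ α β : Set ℕ, ∃ k : ℕ, ∀ n, k < n → rr n α = rr n β → α = β := by
      intro α β
      by_cases h : α = β
      · exact ⟨0, fun _ _ _ => h⟩
      · obtain ⟨k, hk⟩ : ∃ k, ¬ (k ∈ α ↔ k ∈ β) := by
          by_contra hcon
          push Not at hcon
          exact h (Set.ext hcon)
        refine ⟨k, fun n hn e => absurd ?_ hk⟩
        have := Set.ext_iff.1 e k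
        simpa [rr, hn] using this
    choose K hK using hsep
    set N2 := (s ×ˢ s).sup fun p => K p.1 p.2 with hN2
    set n := max N1 N2 with hn
    have hinj : ∀ α ∈ s, ∀ β ∈ s, rr (n + 1) α = rr (n + 1) β → α = β := by
      intro α hα β hβ
      apply hK
      have : K α β ≤ N2 := Finset.le_sup (f := fun p : Set ℕ × Set ℕ => K p.1 p.2)
        (Finset.mk_mem_product hα hβ)
      omega
    have ext : ∀ v : Set ℕ → Om G, (∀ α ∈ s, v α ∈ ⋂ n, X n α) →
        ∃ v' : Set ℕ → Om G, (∀ β, v' β ∈ X (n + 1) β) ∧ ∀ α ∈ s, v' (rr (n + 1) α) = v α := by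
      intro v hv
      have : ∀ β, ∃ z ∈ X (n + 1) β, ∀ α ∈ s, rr (n + 1) α = β → z = v α := by
        intro β
        by_cases h : ∃ α ∈ s, rr (n + 1) α = β
        · obtain ⟨α, hα, rfl⟩ := h
          refine ⟨v α, ?_, fun α' hα' e => by rw [hinj _ hα' _ hα e]⟩
          rw [(hX (n + 1)).2]
          exact Set.mem_iInter.1 (hv α hα) _
        · obtain ⟨z, hz⟩ := ((hX (n + 1)).1 β).nonempty
          exact ⟨z, hz, fun α hα e => absurd ⟨α, hα, e⟩ h⟩
      choose v' h1 h2 using this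
      exact ⟨v', h1, fun α hα => h2 _ α hα rfl⟩
    obtain ⟨u', hu1, hu2⟩ := ext u hu
    obtain ⟨y', hy1, hy2⟩ := ext y hy
    obtain ⟨g, hg⟩ := hstar n u' y' hu1 hy1
    have hWn : ∀ w ∈ W, f w < n := fun w hw => lt_of_lt_of_le (hN1 w hw) (le_max_left _ _)
    refine ⟨g, fun α hα w hw γ hγ => ?_⟩
    have := hg (rr (n + 1) α) ⟨α, rfl⟩ w (hWn w hw) γ (hWn γ hγ)
    rwa [hu2 α hα, hy2 α hα] at this

end MF

namespace MF

/-- The shift action on an invariant set of configurations. -/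
@[reducible] def shAction {G : Type*} [Group G] (Y : Set (Om G))
    (h : ∀ g, ∀ x ∈ Y, sh g x ∈ Y) : MulAction G Y where
  smul g x := ⟨sh g x.1, h g x.1 x.2⟩
  one_smul x := Subtype.ext (funext fun k => by show x.1 (k * 1) = x.1 k; rw [mul_one])
  mul_smul g₁ g₂ x := Subtype.ext (funext fun k => by
    show x.1 (k * (g₁ * g₂)) = x.1 (k * g₁ * g₂)
    rw [mul_assoc])

/-- The flow attached to an invariant set of configurations. -/
def flow {G : Type*} [Group G] (Y : Set (Om G)) (h : ∀ g, ∀ x ∈ Y, sh g x ∈ Y) : GFlow G :=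
  letI := shAction Y h
  { carrier := Y }

theorem tendsto_flow {G : Type*} [Group G] (Y : Set (Om G)) (h : ∀ g, ∀ x ∈ Y, sh g x ∈ Y)
    (x u : (flow Y h).carrier) (g : Finset G → G)
    (hg : ∀ F : Finset G, ∀ w ∈ F, ∀ γ ∈ F, x.1 (w * g F) γ = u.1 w γ) :
    Filter.Tendsto (fun F => g F • x) Filter.atTop (nhds u) := by
  classical
  refine tendsto_subtype_rng.2 (tendsto_pi_nhds.2 fun w => tendsto_pi_nhds.2 fun γ => ?_)
  refine tendsto_const_nhds.congr' ?_
  filter_upwards [Filter.eventually_ge_atTop ({w, γ} : Finset G)] with F hF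
  exact (hg F w (hF (by simp)) γ (hF (by simp))).symm

end MF

/-- Let `G` be a countable, infinite discrete group.  Then there exists a
family, indexed by `Set ℕ` (hence of cardinality continuum), of free, metrizable, minimal
`G`-flows that are mutually disjoint: the product of every finite subfamily (with the
diagonal `G`-action) is minimal. -/
theorem exists_continuum_many_mutually_disjoint_free_minimal_flows
    {G : Type u} [Group G] [Countable G] [Infinite G] :
    ∃ Y : Set ℕ → GFlow G,
      (∀ i, CompactSpace (Y i).carrier) ∧ (∀ i, T2Space (Y i).carrier) ∧
      (∀ i, Nonempty (Y i).carrier) ∧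
      (∀ i, TopologicalSpace.MetrizableSpace (Y i).carrier) ∧
      (∀ i, ContinuousConstSMul G (Y i).carrier) ∧
      (∀ i, ∀ (g : G) (y : (Y i).carrier), g • y = y → g = 1) ∧
      (∀ i, IsMinimalFlow G (Y i).carrier) ∧
      (∀ s : Finset (Set ℕ),
        ∀ x : (∀ i : s, (Y i).carrier), Dense (MulAction.orbit G x)) := by
  classical
  obtain ⟨Y, hcl, hne, hinv, hsub, hmin⟩ := MF.main (G := G)
  have hprod : ∀ s : Finset (Set ℕ), ∀ x : (∀ i : s, (MF.flow (Y i) (hinv i)).carrier),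
      Dense (MulAction.orbit G x) := by
    intro s x u
    have key : ∀ F : Finset G, ∃ g : G, ∀ i : s, ∀ w ∈ F, ∀ γ ∈ F,
        (x i).1 (w * g) γ = (u i).1 w γ := by
      intro F
      obtain ⟨g, hg⟩ := hmin s (F : Set G) F.finite_toSet
        (fun α => if h : α ∈ s then (u ⟨α, h⟩).1 else fun _ _ => 0)
        (fun α => if h : α ∈ s then (x ⟨α, h⟩).1 else fun _ _ => 0)
        (fun α hα => by simp only [hα, dif_pos]; exact (u ⟨α, hα⟩).2)
        (fun α hα => by simp only [hα, dif_pos]; exact (x ⟨α, hα⟩).2)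
      refine ⟨g, fun i w hw γ hγ => ?_⟩
      have := hg i i.2 w hw γ hγ
      simpa only [i.2, dif_pos] using this
    choose g hg using key
    refine mem_closure_of_tendsto (f := fun F => g F • x) (b := Filter.atTop) ?_
      (Filter.Eventually.of_forall fun F => ⟨g F, rfl⟩)
    exact tendsto_pi_nhds.2 fun i => MF.tendsto_flow _ _ (x i) (u i) g fun F => hg F i
  refine ⟨fun α => MF.flow (Y α) (hinv α), ?_, ?_, ?_, ?_, ?_, ?_, ?_, hprod⟩
  · exact fun α => isCompact_iff_compactSpace.1 (hcl α).isCompact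
  · exact fun α => inferInstanceAs (T2Space (Y α))
  · exact fun α => (hne α).to_subtype
  · exact fun α => inferInstanceAs (TopologicalSpace.MetrizableSpace (Y α))
  · refine fun α => ⟨fun g => ?_⟩
    refine Continuous.subtype_mk (f := fun x : Y α => MF.sh g x.1) ?_ _
    refine continuous_pi fun k => ?_
    exact (continuous_apply (k * g)).comp continuous_subtype_val
  · intro α g y hy
    by_contra hg
    have h1 : MF.sh g y.1 = y.1 := congrArg Subtype.val hy
    have h2 := hsub α y.2 g hg 1
    apply h2
    have h3 := congrFun (congrFun h1 1) g
    simpa [MF.sh] using h3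
  · intro α x u
    have key : ∀ F : Finset G, ∃ g : G, ∀ w ∈ F, ∀ γ ∈ F, x.1 (w * g) γ = u.1 w γ := by
      intro F
      have ms : ∀ β ∈ ({α} : Finset (Set ℕ)), β = α := fun β hβ => by simpa using hβ
      obtain ⟨g, hg⟩ := hmin {α} (F : Set G) F.finite_toSet (fun _ => u.1) (fun _ => x.1)
        (fun β hβ => by rw [ms β hβ]; exact u.2) (fun β hβ => by rw [ms β hβ]; exact x.2)
      exact ⟨g, hg α (by simp)⟩
    choose g hg using key
    exact mem_closure_of_tendsto (MF.tendsto_flow _ _ x u g hg)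
      (Filter.Eventually.of_forall fun F => ⟨g F, rfl⟩)
end

section
/- Let G be a countable icc group (every element other than the identity has an infinite conjugacy class). Then G admits a free, metrizable, minimal, proximal G-flow. -/
open Pointwise

universe u v

/-- A `G`-flow is proximal if any two points can be simultaneously pushed to a single
point: `(y, y)` lies in the closure of `{(g • x₁, g • x₂) : g ∈ G}` for some `y`. -/
def IsProximalFlow (G : Type*) [Group G] (X : Type*) [TopologicalSpace X]
    [MulAction G X] : Prop :=
  ∀ x₁ x₂ : X, ∃ y : X, (y, y) ∈ closure (Set.range fun g : G => (g • x₁, g • x₂))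


namespace IccAux

/-- covered by finitely many left cosets of infinite index subgroups -/
def Small {G : Type u} [Group G] (X : Set G) : Prop :=
  ∃ s : Finset (G × Subgroup G), (∀ p ∈ s, ¬ p.2.FiniteIndex) ∧
    ∀ x ∈ X, ∃ p ∈ s, p.1⁻¹ * x ∈ p.2

section small
variable {G : Type u} [Group G]

theorem small_mono {X Y : Set G} (h : Small Y) (hXY : X ⊆ Y) : Small X := by
  obtain ⟨s, h1, h2⟩ := h
  exact ⟨s, h1, fun x hx => h2 x (hXY hx)⟩

theorem small_union {X Y : Set G} (hX : Small X) (hY : Small Y) : Small (X ∪ Y) := by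
  classical
  obtain ⟨s, h1, h2⟩ := hX
  obtain ⟨t, h3, h4⟩ := hY
  refine ⟨s ∪ t, ?_, ?_⟩
  · intro p hp
    rcases Finset.mem_union.1 hp with hp | hp
    · exact h1 p hp
    · exact h3 p hp
  · rintro x (hx | hx)
    · obtain ⟨p, hp, h⟩ := h2 x hx
      exact ⟨p, Finset.mem_union_left _ hp, h⟩
    · obtain ⟨p, hp, h⟩ := h4 x hx
      exact ⟨p, Finset.mem_union_right _ hp, h⟩

theorem small_empty : Small (∅ : Set G) := ⟨∅, by simp, by simp⟩

theorem small_biUnion {ι : Type*} {s : Set ι} (hs : s.Finite) (X : ι → Set G)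
    (h : ∀ i ∈ s, Small (X i)) : Small (⋃ i ∈ s, X i) := by
  induction s, hs using Set.Finite.induction_on with
  | empty => simpa using small_empty
  | insert _ _ ih =>
    rw [Set.biUnion_insert]
    exact small_union (h _ (Set.mem_insert _ _)) (ih fun i hi => h i (Set.mem_insert_of_mem _ hi))

theorem small_translate {X : Set G} (g : G) (h : Small X) : Small {y | g * y ∈ X} := by
  classical
  obtain ⟨s, h1, h2⟩ := h
  refine ⟨s.image (fun p => (g⁻¹ * p.1, p.2)), ?_, ?_⟩
  · intro p hp
    obtain ⟨q, hq, rfl⟩ := Finset.mem_image.1 hp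
    exact h1 q hq
  · intro x hx
    obtain ⟨p, hp, h⟩ := h2 _ hx
    refine ⟨_, Finset.mem_image_of_mem _ hp, ?_⟩
    simpa [mul_assoc] using h

theorem not_small_univ : ¬ Small (Set.univ : Set G) := by
  rintro ⟨s, h1, h2⟩
  have := Subgroup.exists_finiteIndex_of_leftCoset_cover (s := s) (H := fun p => p.2)
    (g := fun p => p.1) (by
      ext x
      simp only [Set.mem_iUnion, Set.mem_univ, iff_true]
      obtain ⟨p, hp, h⟩ := h2 x trivial
      exact ⟨p, hp, by rw [mem_leftCoset_iff]; exact h⟩)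
  obtain ⟨k, hk, hf⟩ := this
  exact h1 k hk hf

theorem small_singleton [Infinite G] (x : G) : Small ({x} : Set G) := by
  refine ⟨{(x, ⊥)}, ?_, ?_⟩
  · intro p hp
    rw [Finset.mem_singleton.1 hp]
    intro h
    have h2 := (⊥ : Subgroup G).finite_quotient_of_finiteIndex
    have : Finite G := Finite.of_equiv _ (QuotientGroup.quotientBot (G := G)).toEquiv
    exact not_finite G
  · rintro y rfl
    exact ⟨_, Finset.mem_singleton_self _, by simp⟩

theorem centralizer_not_finiteIndex (hicc : ∀ g : G, g ≠ 1 → {h : G | IsConj g h}.Infinite) {z : G} (hz : z ≠ 1) :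
    ¬ (Subgroup.centralizer {z} : Subgroup G).FiniteIndex := by
  intro h
  have := (Subgroup.centralizer {z} : Subgroup G).finite_quotient_of_finiteIndex
  apply hicc z hz
  apply (Set.finite_range (fun x : G ⧸ (Subgroup.centralizer {z} : Subgroup G) =>
    x.out * z * x.out⁻¹)).subset
  rintro y hy
  obtain ⟨c, rfl⟩ := isConj_iff.1 hy
  refine ⟨(c : G ⧸ (Subgroup.centralizer {z} : Subgroup G)), ?_⟩
  obtain ⟨k, hk⟩ := QuotientGroup.mk_out_eq_mul (Subgroup.centralizer {z} : Subgroup G) c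
  have h2 := Subgroup.mem_centralizer_singleton_iff.1 k.2
  dsimp only
  rw [hk, mul_inv_rev]
  calc c * (k:G) * z * ((k:G)⁻¹ * c⁻¹) = c * ((k:G) * z) * (k:G)⁻¹ * c⁻¹ := by group
    _ = c * z * c⁻¹ := by rw [h2]; group

theorem small_conj (hicc : ∀ g : G, g ≠ 1 → {h : G | IsConj g h}.Infinite) {z n : G} (hz : z ≠ 1) : Small {q : G | q * z * q⁻¹ = n} := by
  by_cases h : ∃ q0 : G, q0 * z * q0⁻¹ = n
  · obtain ⟨q0, h0⟩ := h
    refine ⟨{(q0, Subgroup.centralizer {z})}, ?_, ?_⟩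
    · intro p hp
      rw [Finset.mem_singleton.1 hp]
      exact centralizer_not_finiteIndex hicc hz
    · intro q hq
      refine ⟨_, Finset.mem_singleton_self _, ?_⟩
      rw [Subgroup.mem_centralizer_singleton_iff]
      have hq : q * z * q⁻¹ = q0 * z * q0⁻¹ := by rw [h0]; exact hq
      have : q * z = q0 * z * q0⁻¹ * q := by rw [← hq]; group
      rw [mul_assoc, this]; group
  · refine small_mono small_empty ?_
    intro q hq
    exact (h ⟨q, hq⟩).elim

theorem small_centralizer (hicc : ∀ g : G, g ≠ 1 → {h : G | IsConj g h}.Infinite) {c : G} (hc : c ≠ 1) : Small {r : G | r * c = c * r} := by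
  refine small_mono (small_conj hicc (n := c) hc) ?_
  intro r hr
  have hr : r * c = c * r := hr
  show r * c * r⁻¹ = c
  rw [hr]; group

theorem exists_generic (hicc : ∀ g : G, g ≠ 1 → {h : G | IsConj g h}.Infinite) [Infinite G] {Φ : Set G} (hΦ : Φ.Finite) :
    ∃ q : G, q ∉ Φ ∧ (∀ z ∈ Φ, z ≠ 1 → q * z * q⁻¹ ∉ Φ) ∧ (∀ a ∈ Φ, q * a * q ∉ Φ) := by
  by_contra hcon
  push Not at hcon
  -- the small part
  set S : Set G := (⋃ n ∈ Φ, {n}) ∪ (⋃ p ∈ {p ∈ Φ ×ˢ Φ | p.1 ≠ 1}, {q : G | q * p.1 * q⁻¹ = p.2}) ∪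
    (⋃ p ∈ {p ∈ Φ ×ˢ Φ | p.1 * p.2 ≠ 1}, {q : G | (p.1 * q) * (p.1 * p.2) = (p.1 * p.2) * (p.1 * q)})
    with hS
  have hSs : Small S := by
    refine small_union (small_union ?_ ?_) ?_
    · exact small_biUnion hΦ _ fun i _ => small_singleton i
    · refine small_biUnion ((hΦ.prod hΦ).subset (Set.sep_subset _ _)) _ ?_
      rintro p ⟨_, hp⟩
      exact small_conj hicc hp
    · refine small_biUnion ((hΦ.prod hΦ).subset (Set.sep_subset _ _)) _ ?_
      rintro p ⟨_, hp⟩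
      exact small_translate p.1 (small_centralizer hicc hp)
  -- everything else is in translates of the involutions
  have hcov : ∀ q : G, q ∉ S → ∃ a ∈ Φ, (a * q) * (a * q) = 1 := by
    intro q hq
    by_contra hno
    push Not at hno
    have h1 : q ∉ Φ := fun h => hq (Or.inl (Or.inl (Set.mem_biUnion h rfl)))
    have h2 : ∀ z ∈ Φ, z ≠ 1 → q * z * q⁻¹ ∉ Φ := by
      intro z hz hz1 h
      exact hq (Or.inl (Or.inr (Set.mem_biUnion (x := (z, q * z * q⁻¹)) ⟨⟨hz, h⟩, hz1⟩ rfl)))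
    obtain ⟨a, ha, hb⟩ := hcon q h1 h2
    have h3 : a * (q * a * q) = 1 := by
      by_contra h3
      apply hq
      refine Or.inr (Set.mem_biUnion (x := (a, q * a * q)) ⟨⟨ha, hb⟩, h3⟩ ?_)
      show (a * q) * (a * (q * a * q)) = (a * (q * a * q)) * (a * q)
      group
    exact hno a ha (by rw [← h3]; group)
  obtain ⟨b, hb⟩ := hΦ.exists_notMem
  -- involutions translated by b are small
  have hI : Small {r : G | r * r = 1} := by
    have h1 : Small {q : G | (b * q) * (b * q) = 1} := by
      refine small_mono (small_union hSs (small_biUnion hΦ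
        (fun a => {y : G | b * y ∈ {r : G | r * (a * b⁻¹) * r⁻¹ = (a * b⁻¹)⁻¹}}) ?_)) ?_
      · intro a ha
        refine small_translate b (small_conj hicc ?_)
        intro h
        rw [mul_inv_eq_one] at h
        exact hb (h ▸ ha)
      · intro q hq
        by_cases hqS : q ∈ S
        · exact Or.inl hqS
        · right
          obtain ⟨a, ha, h⟩ := hcov q hqS
          refine Set.mem_biUnion ha ?_
          have hq : (b * q) * (b * q) = 1 := hq
          show (b * q) * (a * b⁻¹) * (b * q)⁻¹ = (a * b⁻¹)⁻¹
          have e1 : (b * q)⁻¹ = b * q := inv_eq_of_mul_eq_one_left hq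
          rw [e1]
          apply eq_inv_of_mul_eq_one_right
          calc a * b⁻¹ * (b * q * (a * b⁻¹) * (b * q)) = (a * q) * (a * q) := by group
            _ = 1 := h
    have h2 := small_translate b⁻¹ h1
    refine small_mono h2 ?_
    intro r hr
    show (b * (b⁻¹ * r)) * (b * (b⁻¹ * r)) = 1
    rw [mul_inv_cancel_left]; exact hr
  apply not_small_univ (G := G)
  refine small_mono (small_union hSs (small_biUnion hΦ
    (fun a => {y : G | a * y ∈ {r : G | r * r = 1}}) fun a _ => small_translate a hI)) ?_
  intro q _
  by_cases hqS : q ∈ S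
  · exact Or.inl hqS
  · right
    obtain ⟨a, ha, h⟩ := hcov q hqS
    exact Set.mem_biUnion ha h
end small
end IccAux

namespace IccAux
section tower
variable {G : Type u} [Group G]

/-- a tower of finite symmetric sets with generic elements -/
structure Tower (V : Set G) (t : ℕ → G) (S : ℕ → Set G) : Prop where
  fin : ∀ l, (S l).Finite
  one : ∀ l, (1 : G) ∈ S l
  inv : ∀ l, ∀ x ∈ S l, x⁻¹ ∈ S l
  base : V ⊆ S 0
  succ : ∀ l, S l ⊆ S (l + 1)
  mem : ∀ l, t l ∈ S (l + 1)
  g1 : ∀ l, t l ∉ S l ^ 8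
  g2 : ∀ l, ∀ z ∈ S l ^ 8, z ≠ 1 → t l * z * (t l)⁻¹ ∉ S l ^ 8
  g3 : ∀ l, ∀ a ∈ S l ^ 8, t l * a * t l ∉ S l ^ 8

theorem finite_pow {S : Set G} (h : S.Finite) (n : ℕ) : (S ^ n).Finite := by
  induction n with
  | zero => simp
  | succ n ih => rw [pow_succ]; exact ih.mul h

theorem exists_tower [Infinite G] (hicc : ∀ g : G, g ≠ 1 → {h : G | IsConj g h}.Infinite)
    {V : Set G} (hV : V.Finite) (hV1 : (1 : G) ∈ V) (hVi : ∀ x ∈ V, x⁻¹ ∈ V) :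
    ∃ (t : ℕ → G) (S : ℕ → Set G), Tower V t S := by
  let St := {S : Set G // S.Finite ∧ (1 : G) ∈ S ∧ ∀ x ∈ S, x⁻¹ ∈ S}
  have hgen : ∀ S : St, ∃ q : G, q ∉ S.1 ^ 8 ∧ (∀ z ∈ S.1 ^ 8, z ≠ 1 → q * z * q⁻¹ ∉ S.1 ^ 8) ∧
      (∀ a ∈ S.1 ^ 8, q * a * q ∉ S.1 ^ 8) := fun S =>
    exists_generic hicc (finite_pow S.2.1 8)
  choose q hq using hgen
  let nxt : St → St := fun S => ⟨S.1 ∪ {q S, (q S)⁻¹}, S.2.1.union (by simp), Or.inl S.2.2.1, by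
    rintro x (hx | hx | hx)
    · exact Or.inl (S.2.2.2 x hx)
    · right; right; rw [hx]; rfl
    · right; left; rw [hx, inv_inv]⟩
  let s : ℕ → St := fun n => Nat.rec ⟨V, hV, hV1, hVi⟩ (fun _ S => nxt S) n
  have hs : ∀ n, s (n + 1) = nxt (s n) := fun n => rfl
  refine ⟨fun n => q (s n), fun n => (s n).1, ?_⟩
  constructor
  · exact fun l => (s l).2.1
  · exact fun l => (s l).2.2.1
  · exact fun l => (s l).2.2.2
  · exact subset_rfl
  · intro l x hx
    rw [hs]; exact Or.inl hx
  · intro l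
    show q (s l) ∈ (s (l + 1)).1
    rw [hs]; exact Or.inr (Or.inl rfl)
  · exact fun l => (hq (s l)).1
  · exact fun l => (hq (s l)).2.1
  · exact fun l => (hq (s l)).2.2

/-- membership in powers -/
def In (S : ℕ → Set G) (l k : ℕ) (x : G) : Prop := x ∈ S l ^ k

theorem In.mul {S : ℕ → Set G} {l a b : ℕ} {x y : G} (hx : In S l a x) (hy : In S l b y) :
    In S l (a + b) (x * y) := by
  unfold In; rw [pow_add]; exact Set.mul_mem_mul hx hy

variable {V : Set G} {t : ℕ → G} {S : ℕ → Set G}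

namespace Tower

theorem of1 {l : ℕ} {x : G} (hx : x ∈ S l) : In S l 1 x := by
  unfold In; rwa [pow_one]

theorem in_inv (T : Tower V t S) {l k : ℕ} {x : G} (hx : In S l k x) : In S l k x⁻¹ := by
  have h : (S l)⁻¹ = S l := by
    ext y; rw [Set.mem_inv]
    exact ⟨fun h => by simpa using T.inv l _ h, fun h => T.inv l _ h⟩
  unfold In at *
  rw [← h, inv_pow, Set.mem_inv, inv_inv]; exact hx

theorem in_one (T : Tower V t S) {l k : ℕ} : In S l k 1 := by
  unfold In
  induction k with
  | zero => simp
  | succ n ih => rw [pow_succ]; exact ⟨1, ih, 1, T.one l, by simp⟩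

theorem in_mono (T : Tower V t S) {l a b : ℕ} {x : G} (hx : In S l a x) (h : a ≤ b) : In S l b x := by
  obtain ⟨c, rfl⟩ := Nat.exists_eq_add_of_le h
  have := hx.mul (T.in_one (l := l) (k := c))
  rwa [mul_one] at this

theorem S_mono (T : Tower V t S) {l m : ℕ} (h : l ≤ m) : S l ⊆ S m :=
  monotone_nat_of_le_succ T.succ h

theorem in_level (T : Tower V t S) {l m k : ℕ} {x : G} (hx : In S l k x) (h : l ≤ m) : In S m k x :=
  Set.pow_subset_pow_left (T.S_mono h) hx

theorem in_t (T : Tower V t S) {a l : ℕ} (h : a < l) : In S l 1 (t a) :=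
  of1 (T.S_mono h (T.mem a))

theorem in_V (T : Tower V t S) {l : ℕ} {v : G} (h : v ∈ V) : In S l 1 v :=
  of1 (T.S_mono (Nat.zero_le l) (T.base h))

theorem n1 (T : Tower V t S) {l k : ℕ} {x : G} (hx : In S l k x) (hk : k ≤ 8) (h : x = t l) : False :=
  T.g1 l (h ▸ T.in_mono hx hk)

theorem n2 (T : Tower V t S) {l k m : ℕ} {x y : G} (hx : In S l k x) (hy : In S l m y) (hk : k ≤ 8)
    (hm : m ≤ 8) (h : t l * x * (t l)⁻¹ = y) : x = 1 := by
  by_contra h1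
  exact T.g2 l x (T.in_mono hx hk) h1 (h ▸ T.in_mono hy hm)

theorem n3 (T : Tower V t S) {l k m : ℕ} {x y : G} (hx : In S l k x) (hy : In S l m y) (hk : k ≤ 8)
    (hm : m ≤ 8) (h : t l * x * t l = y) : False :=
  T.g3 l x (T.in_mono hx hk) (h ▸ T.in_mono hy hm)

theorem AA (T : Tower V t S) {l : ℕ} {y y' w : G} (hy : In S l 3 y) (hy' : In S l 3 y') (hw : w ∈ V)
    (h : t l * y = w * (t l * y')) : w = 1 := by
  have e : t l * (y * y'⁻¹) * (t l)⁻¹ = w := by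
    rw [← mul_assoc, h]; group
  have := T.n2 (hy.mul (T.in_inv hy')) (T.in_V hw) (by norm_num) (by norm_num) e
  rw [← e, this]; group

theorem LL (T : Tower V t S) {l : ℕ} {a b y y' w : G} (hy : In S l 2 y) (hy' : In S l 2 y')
    (ha : In S l 1 a) (hb : In S l 1 b) (hw : w ∈ V)
    (h : a * (t l)⁻¹ * y = w * (b * (t l)⁻¹ * y')) : a = w * b := by
  have e : t l * (a⁻¹ * w * b) * (t l)⁻¹ = y * y'⁻¹ := by
    calc _ = t l * a⁻¹ * (w * (b * (t l)⁻¹ * y')) * y'⁻¹ := by group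
      _ = _ := by rw [← h]; group
  have := T.n2 (((T.in_inv ha).mul (T.in_V hw)).mul hb) (hy.mul (T.in_inv hy')) (by norm_num)
    (by norm_num) e
  calc a = a * (a⁻¹ * w * b) := by rw [this, mul_one]
    _ = _ := by group

theorem AL (T : Tower V t S) {l : ℕ} {a y y' w : G} (hy : In S l 3 y) (hy' : In S l 2 y')
    (ha : In S l 1 a) (hw : w ∈ V) (h : t l * y = w * (a * (t l)⁻¹ * y')) : False := by
  have e : t l * (y * y'⁻¹) * t l = w * a := by
    rw [← mul_assoc, h]; group
  exact T.n3 (hy.mul (T.in_inv hy')) ((T.in_V hw).mul ha) (by norm_num) (by norm_num) e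

theorem LR (T : Tower V t S) {l : ℕ} {a y x w : G} (hy : In S l 2 y) (hx : In S l 3 x)
    (ha : In S l 1 a) (hw : w ∈ V) (h : a * (t l)⁻¹ * y = w * (x * t l)) : False := by
  have e : t l * (a⁻¹ * w * x) * t l = y := by
    calc _ = t l * a⁻¹ * (w * (x * t l)) := by group
      _ = _ := by rw [← h]; group
  exact T.n3 (((T.in_inv ha).mul (T.in_V hw)).mul hx) hy (by norm_num) (by norm_num) e

theorem AR (T : Tower V t S) {l : ℕ} {y x w : G} (hy : In S l 3 y) (hx : In S l 3 x)
    (hw : w ∈ V) (h : t l * y = w * (x * t l)) : y = 1 := by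
  have e : t l * y * (t l)⁻¹ = w * x := by
    rw [h]; group
  exact T.n2 hy ((T.in_V hw).mul hx) (by norm_num) (by norm_num) e

theorem sep_lt (T : Tower V t S) {i j : ℕ} {w : G} (hw : w ∈ V) (hij : i < j)
    (h : t i = w * t j) : False :=
  T.n1 ((T.in_inv (T.in_V hw)).mul (T.in_t hij)) (by norm_num) (by rw [h]; group)

theorem sep_ne (T : Tower V t S) (hVi : ∀ x ∈ V, x⁻¹ ∈ V) {i j : ℕ} {w : G} (hw : w ∈ V) (hij : i ≠ j)
    (h : t i = w * t j) : False := by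
  rcases lt_or_gt_of_ne hij with hl | hl
  · exact T.sep_lt hw hl h
  · exact T.sep_lt (hVi w hw) hl (by rw [h]; group)

theorem sep (T : Tower V t S) (hVi : ∀ x ∈ V, x⁻¹ ∈ V) {i j : ℕ} {w : G} (hw : w ∈ V)
    (h : t i = w * t j) : w = 1 := by
  by_cases hij : i = j
  · subst hij; simpa using h
  · exact (T.sep_ne hVi hw hij h).elim

/-- short words -/
def Xd (V : Set G) (t : ℕ → G) (S : ℕ → Set G) (l : ℕ) (x : G) : Prop :=
  (∃ y, In S l 2 y ∧ x = t l * y) ∨ (∃ a v, a < l ∧ v ∈ V ∧ x = t a * (t l)⁻¹ * v)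

theorem Xd_mk (T : Tower V t S) {a i : ℕ} {v : G} (hv : v ∈ V) (h : a ≠ i) :
    Xd V t S (max a i) (t a * (t i)⁻¹ * v) := by
  rcases lt_or_gt_of_ne h with hl | hl
  · right; rw [max_eq_right hl.le]; exact ⟨a, v, hl, hv, rfl⟩
  · left; rw [max_eq_left hl.le]
    exact ⟨(t i)⁻¹ * v, (T.in_inv (T.in_t hl)).mul (T.in_V hv), by group⟩

theorem Xd_in (T : Tower V t S) {l m : ℕ} {x : G} (h : Xd V t S l x) (hl : l < m) : In S m 3 x := by
  rcases h with ⟨y, hy, rfl⟩ | ⟨a, v, ha, hv, rfl⟩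
  · exact (T.in_t hl).mul (T.in_level hy hl.le)
  · exact ((T.in_t (ha.trans hl)).mul (T.in_inv (T.in_t hl))).mul (T.in_V hv)

theorem Xd_notin (T : Tower V t S) {l : ℕ} {x : G} (h : Xd V t S l x) (hx : In S l 4 x) : False := by
  rcases h with ⟨y, hy, rfl⟩ | ⟨a, v, ha, hv, rfl⟩
  · exact T.n1 (hx.mul (T.in_inv hy)) (by norm_num) (by group)
  · exact T.n1 (((T.in_V hv).mul (T.in_inv hx)).mul (T.in_t ha)) (by norm_num) (by group)

theorem Xd_sep (T : Tower V t S) (hVi : ∀ x ∈ V, x⁻¹ ∈ V) {l m : ℕ} {x x' w : G} (h : Xd V t S l x)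
    (h' : Xd V t S m x') (hw : w ∈ V) (e : x = w * x') : w = 1 := by
  have e' : x' = w⁻¹ * x := by rw [e]; group
  rcases lt_trichotomy l m with hl | rfl | hl
  · exact (T.Xd_notin h' (by rw [e']; exact (T.in_V (hVi w hw)).mul (T.Xd_in h hl))).elim
  · rcases h with ⟨y, hy, rfl⟩ | ⟨a, v, ha, hv, rfl⟩ <;>
      rcases h' with ⟨y', hy', rfl⟩ | ⟨b, u, hb, hu, rfl⟩
    · exact T.AA (T.in_mono hy (by norm_num)) (T.in_mono hy' (by norm_num)) hw e
    · exact (T.AL (T.in_mono hy (by norm_num)) (T.in_mono (T.in_V hu) (by norm_num))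
        (T.in_t hb) hw e).elim
    · exact (T.AL (T.in_mono hy' (by norm_num)) (T.in_mono (T.in_V hv) (by norm_num))
        (T.in_t ha) (hVi w hw) e').elim
    · exact T.sep hVi hw (T.LL (T.in_mono (T.in_V hv) (by norm_num))
        (T.in_mono (T.in_V hu) (by norm_num)) (T.in_t ha) (T.in_t hb) hw e)
  · exact (T.Xd_notin h (by rw [e]; exact (T.in_V hw).mul (T.Xd_in h' hl))).elim

/-- words -/
def Wd (V : Set G) (t : ℕ → G) (S : ℕ → Set G) (l : ℕ) (p : G) : Prop :=
  (∃ y, In S l 3 y ∧ (y ≠ 1 ∨ l = 0) ∧ p = t l * y) ∨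
  (∃ a y, a < l ∧ In S l 2 y ∧ p = t a * (t l)⁻¹ * y) ∨
  (∃ a i v, a < l ∧ i < l ∧ a ≠ i ∧ v ∈ V ∧ p = t a * (t i)⁻¹ * v * t l)

theorem in_x (T : Tower V t S) {a i l : ℕ} {v : G} (ha : a < l) (hi : i < l) (hv : v ∈ V) :
    In S l 3 (t a * (t i)⁻¹ * v) :=
  ((T.in_t ha).mul (T.in_inv (T.in_t hi))).mul (T.in_V hv)

theorem Wd_in (T : Tower V t S) {l m : ℕ} {x : G} (h : Wd V t S l x) (hl : l < m) : In S m 4 x := by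
  rcases h with ⟨y, hy, -, rfl⟩ | ⟨a, y, ha, hy, rfl⟩ | ⟨a, i, v, ha, hi, -, hv, rfl⟩
  · exact (T.in_t hl).mul (T.in_level hy hl.le)
  · exact ((T.in_t (ha.trans hl)).mul (T.in_inv (T.in_t hl))).mul (T.in_level hy hl.le)
  · exact (T.in_x (ha.trans hl) (hi.trans hl) hv).mul (T.in_t hl)

theorem Wd_notin (T : Tower V t S) {l : ℕ} {x : G} (h : Wd V t S l x) (hx : In S l 5 x) : False := by
  rcases h with ⟨y, hy, -, rfl⟩ | ⟨a, y, ha, hy, rfl⟩ | ⟨a, i, v, ha, hi, -, hv, rfl⟩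
  · exact T.n1 (hx.mul (T.in_inv hy)) (by norm_num) (by group)
  · exact T.n1 ((hy.mul (T.in_inv hx)).mul (T.in_t ha)) (by norm_num) (by group)
  · exact T.n1 ((T.in_inv (T.in_x ha hi hv)).mul hx) (by norm_num) (by group)

theorem Wd_sep (T : Tower V t S) (hVi : ∀ x ∈ V, x⁻¹ ∈ V) {l m : ℕ} {x x' w : G} (h : Wd V t S l x)
    (h' : Wd V t S m x') (hw : w ∈ V) (e : x = w * x') : w = 1 := by
  have e' : x' = w⁻¹ * x := by rw [e]; group
  have hw' := hVi w hw
  rcases lt_trichotomy l m with hl | rfl | hl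
  · exact (T.Wd_notin h' (by rw [e']; exact (T.in_V (hVi w hw)).mul (T.Wd_in h hl))).elim
  · rcases h with ⟨y, hy, hy1, rfl⟩ | ⟨a, y, ha, hy, rfl⟩ | ⟨a, i, v, ha, hi, hai, hv, rfl⟩ <;>
      rcases h' with ⟨y', hy', hy1', rfl⟩ | ⟨b, y', hb, hy', rfl⟩ | ⟨b, j, u, hb, hj, hbj, hu, rfl⟩
    · exact T.AA hy hy' hw e
    · exact (T.AL hy hy' (T.in_t hb) hw e).elim
    · have := T.AR hy (T.in_x hb hj hu) hw e
      rcases hy1 with h | h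
      · exact (h this).elim
      · omega
    · exact (T.AL hy' hy (T.in_t ha) hw' e').elim
    · exact T.sep hVi hw (T.LL hy hy' (T.in_t ha) (T.in_t hb) hw e)
    · exact (T.LR hy (T.in_x hb hj hu) (T.in_t ha) hw e).elim
    · have := T.AR hy' (T.in_x ha hi hv) hw' e'
      rcases hy1' with h | h
      · exact (h this).elim
      · omega
    · exact (T.LR hy' (T.in_x ha hi hv) (T.in_t hb) hw' e').elim
    · refine T.Xd_sep hVi (T.Xd_mk hv hai) (T.Xd_mk hu hbj) hw ?_
      rw [← mul_assoc] at e
      exact mul_right_cancel e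
  · exact (T.Wd_notin h (by rw [e]; exact (T.in_V hw).mul (T.Wd_in h' hl))).elim

theorem Wd_N (T : Tower V t S) (hVi : ∀ x ∈ V, x⁻¹ ∈ V) {a i j : ℕ} {v : G} (hv : v ∈ V) (hai : a ≠ i)
    (haj : a ≠ j) (hij : i ≠ j) : ∃ l, Wd V t S l (t a * ((t i)⁻¹ * v * t j)) := by
  rcases lt_or_gt_of_ne hai with h1 | h1 <;> rcases lt_or_gt_of_ne hij with h2 | h2
  · exact ⟨j, Or.inr (Or.inr ⟨a, i, v, h1.trans h2, h2, hai, hv, by group⟩)⟩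
  · exact ⟨i, Or.inr (Or.inl ⟨a, v * t j, h1, (T.in_V hv).mul (T.in_t h2), by group⟩)⟩
  · rcases lt_or_gt_of_ne haj with h3 | h3
    · exact ⟨j, Or.inr (Or.inr ⟨a, i, v, h3, h2, hai, hv, by group⟩)⟩
    · refine ⟨a, Or.inl ⟨_, ((T.in_inv (T.in_t h1)).mul (T.in_V hv)).mul (T.in_t h3), Or.inl ?_, rfl⟩⟩
      intro h
      refine T.sep_ne hVi hv hij ?_
      rw [mul_assoc, inv_mul_eq_one] at h; exact h
  · refine ⟨a, Or.inl ⟨_, ((T.in_inv (T.in_t h1)).mul (T.in_V hv)).mul (T.in_t (h2.trans h1)),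
      Or.inl ?_, rfl⟩⟩
    intro h
    refine T.sep_ne hVi hv hij ?_
    rw [mul_assoc, inv_mul_eq_one] at h; exact h

theorem Wd_M (T : Tower V t S) {i : ℕ} {v : G} (hv : v ∈ V) (hv1 : v ≠ 1) :
    Wd V t S (i + 1) (t (i + 1) * ((t i)⁻¹ * v * t i)) := by
  have hi : i < i + 1 := Nat.lt_succ_self i
  refine Or.inl ⟨_, ((T.in_inv (T.in_t hi)).mul (T.in_V hv)).mul (T.in_t hi), Or.inl ?_, rfl⟩
  intro h
  apply hv1
  rw [mul_assoc, inv_mul_eq_one] at h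
  simpa using h

theorem Wd_0 (T : Tower V t S) : Wd V t S 0 (t 0) :=
  Or.inl ⟨1, T.in_one, Or.inr rfl, by simp⟩

theorem top_low (T : Tower V t S) {M a : ℕ} {v w p : G} (ha : a < M) (hv : v ∈ V) (hv1 : v ≠ 1) (hw : w ∈ V)
    (hp : In S M 4 p) (e : t a * ((t M)⁻¹ * v * t M) = w * p) : False := by
  have e2 : t M * ((t a)⁻¹ * w * p) * (t M)⁻¹ = v := by
    rw [mul_assoc (t a)⁻¹, ← e]; group
  have := T.n2 (((T.in_inv (T.in_t ha)).mul (T.in_V hw)).mul hp) (T.in_V hv) (by norm_num)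
    (by norm_num) e2
  apply hv1
  rw [← e2, this]; group

theorem top_top (T : Tower V t S) (hVi : ∀ x ∈ V, x⁻¹ ∈ V) {M a b : ℕ} {v u w : G} (ha : a < M) (hb : b < M)
    (hv : v ∈ V) (hu : u ∈ V) (hw : w ∈ V)
    (e : t a * ((t M)⁻¹ * v * t M) = w * (t b * ((t M)⁻¹ * u * t M))) : w = 1 := by
  refine T.sep hVi hw (i := a) (j := b) (T.LL (l := M) (y := v) (y' := u) (T.in_mono (T.in_V hv) (by norm_num))
    (T.in_mono (T.in_V hu) (by norm_num)) (T.in_t ha) (T.in_t hb) hw ?_)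
  apply mul_right_cancel (b := t M)
  calc _ = t a * ((t M)⁻¹ * v * t M) := by group
    _ = _ := by rw [e]; group

theorem inj (T : Tower V t S) (hV1 : (1 : G) ∈ V) (hVi : ∀ x ∈ V, x⁻¹ ∈ V) : Function.Injective t := by
  intro i j h
  by_contra hij
  exact T.sep_ne hVi hV1 hij (by simpa using h)

theorem pick (T : Tower V t S) (hV : V.Finite) (hV1 : (1 : G) ∈ V) (hVi : ∀ x ∈ V, x⁻¹ ∈ V) {M : ℕ}
    (hM : V.ncard * V.ncard + 2 < M) (i j : ℕ) (k : G) (f : G → G) :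
    ∃ a, a < M ∧ a ≠ i ∧ a ≠ j ∧ ∀ w ∈ V, ∀ u ∈ V, t a * k ≠ w * f u := by
  classical
  set Vf := hV.toFinset
  have hVf : Vf.card = V.ncard := (Set.ncard_eq_toFinset_card V hV).symm
  set bad : Finset G := (Vf ×ˢ Vf).image fun p => p.1 * f p.2
  have hbad : bad.card ≤ V.ncard * V.ncard := by
    refine Finset.card_image_le.trans ?_
    rw [Finset.card_product, hVf]
  set pool : Finset ℕ := (Finset.range M \ {i, j})
  have hpool : V.ncard * V.ncard < pool.card := by
    have h1 := Finset.le_card_sdiff ({i, j} : Finset ℕ) (Finset.range M)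
    have h2 : ({i, j} : Finset ℕ).card ≤ 2 := Finset.card_le_two
    rw [Finset.card_range] at h1
    show _ < (Finset.range M \ {i, j}).card
    omega
  have himg : (pool.image fun a => t a * k).card = pool.card :=
    Finset.card_image_of_injective _ fun a b h => T.inj hV1 hVi (mul_right_cancel h)
  obtain ⟨x, hx, hxb⟩ := Finset.exists_mem_notMem_of_card_lt_card (s := bad)
    (t := pool.image fun a => t a * k) (by omega)
  obtain ⟨a, ha, rfl⟩ := Finset.mem_image.1 hx
  simp only [pool, Finset.mem_sdiff, Finset.mem_range, Finset.mem_insert, Finset.mem_singleton,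
    not_or] at ha
  refine ⟨a, ha.1, ha.2.1, ha.2.2, ?_⟩
  intro w hw u hu h
  exact hxb (Finset.mem_image.2 ⟨(w, u), by simp [Vf, hw, hu], h.symm⟩)

end Tower

theorem exists_P1 [Infinite G] (hicc : ∀ g : G, g ≠ 1 → {h : G | IsConj g h}.Infinite)
    {V : Set G} (hV : V.Finite) (hV1 : (1 : G) ∈ V) (hVi : ∀ x ∈ V, x⁻¹ ∈ V) :
    ∃ T P : Set G, T.Finite ∧ P.Finite ∧ T.Nonempty ∧
      (∀ x ∈ T, ∀ y ∈ T, ∀ w ∈ V, x = w * y → w = 1) ∧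
      (∀ x ∈ P, ∀ y ∈ P, ∀ w ∈ V, x = w * y → w = 1) ∧
      (∀ x ∈ T, ∀ v ∈ V, ∀ y ∈ T, ∃ s ∈ T, s * (x⁻¹ * v * y) ∈ P) := by
  obtain ⟨t, S, T⟩ := exists_tower hicc hV hV1 hVi
  set M := V.ncard * V.ncard + 3 with hMdef
  have hM : V.ncard * V.ncard + 2 < M := by omega
  have hf : ∀ v : G, ∃ a, a < M ∧ ∀ w ∈ V, ∀ u ∈ V,
      t a * ((t M)⁻¹ * v * t M) ≠ w * (t M * ((t (M-1))⁻¹ * u * t (M-1))) := by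
    intro v
    obtain ⟨a, h1, -, -, h2⟩ := T.pick hV hV1 hVi hM 0 0 ((t M)⁻¹ * v * t M)
      (fun u => t M * ((t (M-1))⁻¹ * u * t (M-1)))
    exact ⟨a, h1, h2⟩
  choose f hf1 hf2 using hf
  have hg : ∀ (i : ℕ) (v : G) (j : ℕ), ∃ a, a < M ∧ a ≠ i ∧ a ≠ j ∧ ∀ w ∈ V, ∀ u ∈ V,
      t a * ((t i)⁻¹ * v * t j) ≠ w * (t (f u) * ((t M)⁻¹ * u * t M)) := fun i v j =>
    T.pick hV hV1 hVi hM i j ((t i)⁻¹ * v * t j) (fun u => t (f u) * ((t M)⁻¹ * u * t M))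
  choose g hg1 hg2 hg3 hg4 using hg
  have hIM : (Set.Iic M).Finite := Set.finite_Iic M
  -- non-top words
  set Q : Set G := {p | (p = t 0) ∨ (∃ i v, i < M ∧ v ∈ V ∧ v ≠ 1 ∧ p = t (i+1) * ((t i)⁻¹ * v * t i)) ∨
    (∃ i v j, i ≤ M ∧ j ≤ M ∧ i ≠ j ∧ v ∈ V ∧ p = t (g i v j) * ((t i)⁻¹ * v * t j))} with hQ
  set R : Set G := {p | ∃ v, v ∈ V ∧ v ≠ 1 ∧ p = t (f v) * ((t M)⁻¹ * v * t M)} with hR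
  have hQW : ∀ p ∈ Q, ∃ l, Tower.Wd V t S l p := by
    rintro p (rfl | ⟨i, v, hi, hv, hv1, rfl⟩ | ⟨i, v, j, hi, hj, hij, hv, rfl⟩)
    · exact ⟨0, T.Wd_0⟩
    · exact ⟨i+1, T.Wd_M hv hv1⟩
    · exact T.Wd_N hVi hv (hg2 i v j) (hg3 i v j) hij
  have hRQ : ∀ x ∈ R, ∀ y ∈ Q, ∀ w ∈ V, x = w * y → w = 1 := by
    rintro x ⟨v, hv, hv1, rfl⟩ y hy w hw e
    exfalso
    rcases hy with rfl | ⟨i, u, hi, hu, hu1, rfl⟩ | ⟨i, u, j, hi, hj, hij, hu, rfl⟩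
    · exact T.top_low (hf1 v) hv hv1 hw (T.Wd_in T.Wd_0 (by omega)) e
    · by_cases hiM : i + 1 = M
      · have : i = M - 1 := by omega
        subst this
        rw [hiM] at e
        exact hf2 v w hw u hu e
      · exact T.top_low (hf1 v) hv hv1 hw (T.Wd_in (T.Wd_M hu hu1) (by omega)) e
    · exact hg4 i u j w⁻¹ (hVi w hw) v hv (by rw [e]; group)
  refine ⟨t '' Set.Iic M, Q ∪ R, hIM.image _, ?_, ⟨t 0, 0, Nat.zero_le _, rfl⟩, ?_, ?_, ?_⟩
  · refine Set.Finite.union ?_ ?_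
    · refine Set.Finite.subset (((Set.finite_singleton (t 0)).union
        ((hIM.prod hV).image fun q : ℕ × G => t (q.1+1) * ((t q.1)⁻¹ * q.2 * t q.1))).union
        ((hIM.prod (hV.prod hIM)).image fun q : ℕ × G × ℕ => t (g q.1 q.2.1 q.2.2) *
          ((t q.1)⁻¹ * q.2.1 * t q.2.2))) ?_
      rintro p (rfl | ⟨i, v, hi, hv, hv1, rfl⟩ | ⟨i, v, j, hi, hj, hij, hv, rfl⟩)
      · exact Or.inl (Or.inl rfl)
      · exact Or.inl (Or.inr ⟨(i, v), ⟨hi.le, hv⟩, rfl⟩)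
      · exact Or.inr ⟨(i, v, j), ⟨hi, hv, hj⟩, rfl⟩
    · refine Set.Finite.subset (hV.image fun v => t (f v) * ((t M)⁻¹ * v * t M)) ?_
      rintro p ⟨v, hv, -, rfl⟩
      exact ⟨v, hv, rfl⟩
  · rintro _ ⟨i, hi, rfl⟩ _ ⟨j, hj, rfl⟩ w hw e
    exact T.sep hVi hw e
  · rintro x (hx | hx) y (hy | hy) w hw e
    · obtain ⟨l, hl⟩ := hQW x hx
      obtain ⟨m, hm⟩ := hQW y hy
      exact T.Wd_sep hVi hl hm hw e
    · have := hRQ y hy x hx w⁻¹ (hVi w hw) (by rw [e]; group)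
      simpa using this
    · exact hRQ x hx y hy w hw e
    · obtain ⟨v, hv, hv1, rfl⟩ := hx
      obtain ⟨u, hu, hu1, rfl⟩ := hy
      exact T.top_top hVi (hf1 v) (hf1 u) hv hu hw e
  · rintro _ ⟨i, hi, rfl⟩ v hv _ ⟨j, hj, rfl⟩
    have hi : i ≤ M := hi
    have hj : j ≤ M := hj
    by_cases hij : i = j
    · subst hij
      by_cases hv1 : v = 1
      · subst hv1
        exact ⟨t 0, ⟨0, Nat.zero_le _, rfl⟩, Or.inl (Or.inl (by group))⟩
      · rcases hi.lt_or_eq with h | h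
        · exact ⟨t (i+1), ⟨i+1, h, rfl⟩, Or.inl (Or.inr (Or.inl ⟨i, v, h, hv, hv1, rfl⟩))⟩
        · subst h
          exact ⟨t (f v), ⟨f v, (hf1 v).le, rfl⟩, Or.inr ⟨v, hv, hv1, rfl⟩⟩
    · exact ⟨t (g i v j), ⟨g i v j, (hg1 i v j).le, rfl⟩,
        Or.inl (Or.inr (Or.inr ⟨i, v, j, hi, hj, hij, hv, rfl⟩))⟩

end tower
end IccAux

namespace IccAux
section blend
variable {G : Type u} [Group G]

/-- strong irreducibility -/
def SI {A : Type v} (D : Set G) (Y : Set (G → A)) : Prop :=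
  ∀ (ι : Type u) (R : ι → Set G) (y : ι → G → A), (∀ i, y i ∈ Y) →
    (∀ i j, i ≠ j → Disjoint (D * R i) (D * R j)) → ∃ z ∈ Y, ∀ i, ∀ r ∈ R i, z r = y i r

/-- shift invariance -/
def Inv {A : Type v} (Y : Set (G → A)) : Prop := ∀ y ∈ Y, ∀ g : G, (fun h => y (h * g)) ∈ Y

/-- independent -/
def Indep (B : Set G) (E : G → Prop) : Prop :=
  ∀ e e' b, E e → E e' → b ∈ B → e' = b * e → e' = e

/-- maximal independent sets -/
def MIS (B : Set G) : Set (G → Prop) :=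
  {E | Indep B E ∧ ∀ h, ∃ b ∈ B, E (b * h)}

theorem MIS_inv (B : Set G) : Inv (MIS B) := by
  rintro E ⟨h1, h2⟩ g
  refine ⟨?_, ?_⟩
  · intro e e' b he he' hb h
    have := h1 _ _ b he he' hb (by rw [h, mul_assoc])
    exact mul_right_cancel this
  · intro h
    obtain ⟨b, hb, hE⟩ := h2 (h * g)
    exact ⟨b, hb, by simpa [mul_assoc] using hE⟩

theorem MIS_extend {B : Set G} (hB1 : (1 : G) ∈ B) (hBi : ∀ x ∈ B, x⁻¹ ∈ B) {E0 : G → Prop}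
    (h0 : Indep B E0) : ∃ E ∈ MIS B, ∀ h, E0 h → E h := by
  obtain ⟨M, hM1, hM2⟩ := zorn_subset_nonempty {E : Set G | Indep B (fun h => h ∈ E)} (by
    intro c hc hchain _
    refine ⟨⋃₀ c, ?_, fun s hs => Set.subset_sUnion_of_mem hs⟩
    rintro e e' b ⟨s, hs, he⟩ ⟨s', hs', he'⟩ hb h
    rcases hchain.total hs hs' with hss | hss
    · exact hc hs' e e' b (hss he) he' hb h
    · exact hc hs e e' b he (hss he') hb h) {h | E0 h} h0
  refine ⟨fun h => h ∈ M, ⟨hM2.prop, ?_⟩, fun h hh => hM1 hh⟩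
  intro h
  by_contra hno
  push Not at hno
  have hind : Indep B (fun x => x ∈ insert h M) := by
    rintro e e' b (rfl | he) (rfl | he') hb heq
    · rfl
    · exact (hno b hb (heq ▸ he')).elim
    · refine (hno b⁻¹ (hBi b hb) ?_).elim
      rw [heq, inv_mul_cancel_left]; exact he
    · exact hM2.prop e e' b he he' hb heq
  have := hM2.le_of_ge hind (Set.subset_insert _ _) (Set.mem_insert _ _)
  exact hno 1 hB1 (by rwa [one_mul])

theorem MIS_SI {B : Set G} (hB1 : (1 : G) ∈ B) (hBi : ∀ x ∈ B, x⁻¹ ∈ B) : SI (B * B) (MIS B) := by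
  intro ι R y hy hR
  have hind : Indep B (fun h => ∃ i, y i h ∧ ∃ b ∈ B, ∃ r ∈ R i, h = b * r) := by
    rintro e e' b ⟨i, hi, c, hc, r, hr, rfl⟩ ⟨j, hj, c', hc', r', hr', rfl⟩ hb heq
    have hij : i = j := by
      by_contra hij
      have m1 : c' * r' ∈ B * B * R i := by
        rw [heq, ← mul_assoc]
        exact Set.mul_mem_mul (Set.mul_mem_mul hb hc) hr
      have m2 : c' * r' ∈ B * B * R j := by
        rw [← one_mul c']
        exact Set.mul_mem_mul (Set.mul_mem_mul hB1 hc') hr'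
      exact Set.disjoint_left.1 (hR i j hij) m1 m2
    subst hij
    exact (hy i).1 _ _ b hi hj hb heq
  obtain ⟨E, hE, hEE⟩ := MIS_extend hB1 hBi hind
  refine ⟨E, hE, ?_⟩
  intro i r hr
  apply propext
  constructor
  · intro h
    obtain ⟨b, hb, hbr⟩ := (hy i).2 r
    have h2 := hEE (b * r) ⟨i, hbr, b, hb, r, hr, rfl⟩
    have h3 := hE.1 r (b * r) b h h2 hb rfl
    rwa [h3] at hbr
  · intro h
    exact hEE r ⟨i, h, 1, hB1, r, hr, (one_mul r).symm⟩

/-- the blended set -/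
def phi (V T P : Set G) (E E2 : G → Prop) (h : G) : Prop :=
  ((∃ t ∈ T, E (t⁻¹ * h)) ∧ ¬ (∃ v ∈ V, ∃ s ∈ P, E2 (s⁻¹ * v⁻¹ * h))) ∨ ∃ s ∈ P, E2 (s⁻¹ * h)

theorem phi_inv {V T P B B2 : Set G} :
    Inv {C | ∃ E ∈ MIS B, ∃ E2 ∈ MIS B2, C = phi V T P E E2} := by
  rintro _ ⟨E, hE, E2, hE2, rfl⟩ g
  refine ⟨_, MIS_inv B E hE g, _, MIS_inv B2 E2 hE2 g, ?_⟩
  funext h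
  simp only [phi, mul_assoc]

theorem phi_SI {V T P B B2 : Set G} (hV1 : (1 : G) ∈ V)
    (hB1 : (1 : G) ∈ B) (hBi : ∀ x ∈ B, x⁻¹ ∈ B) (hB21 : (1 : G) ∈ B2) (hB2i : ∀ x ∈ B2, x⁻¹ ∈ B2) :
    SI ((B * B ∪ B2 * B2) * (T⁻¹ ∪ P⁻¹ * V⁻¹))
      {C | ∃ E ∈ MIS B, ∃ E2 ∈ MIS B2, C = phi V T P E E2} := by
  intro ι R y hy hR
  choose E hE E2 hE2 hC using hy
  set L : Set G := T⁻¹ ∪ P⁻¹ * V⁻¹ with hL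
  obtain ⟨F, hF, hFE⟩ := MIS_SI hB1 hBi ι (fun i => L * R i) E hE (by
    intro i j hij
    refine (hR i j hij).mono ?_ ?_ <;>
    · simp only [← mul_assoc]
      gcongr
      exact Set.subset_union_left)
  obtain ⟨F2, hF2, hFE2⟩ := MIS_SI hB21 hB2i ι (fun i => L * R i) E2 hE2 (by
    intro i j hij
    refine (hR i j hij).mono ?_ ?_ <;>
    · simp only [← mul_assoc]
      gcongr
      exact Set.subset_union_right)
  refine ⟨phi V T P F F2, ⟨F, hF, F2, hF2, rfl⟩, ?_⟩
  intro i r hr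
  rw [hC]
  have e1 : ∀ t ∈ T, F (t⁻¹ * r) = E i (t⁻¹ * r) := fun t ht =>
    hFE i _ (Set.mul_mem_mul (Or.inl (Set.inv_mem_inv.2 ht)) hr)
  have e2 : ∀ s ∈ P, ∀ v ∈ V, F2 (s⁻¹ * v⁻¹ * r) = E2 i (s⁻¹ * v⁻¹ * r) := fun s hs v hv =>
    hFE2 i _ (Set.mul_mem_mul (Or.inr (Set.mul_mem_mul (Set.inv_mem_inv.2 hs)
      (Set.inv_mem_inv.2 hv))) hr)
  have e3 : ∀ s ∈ P, F2 (s⁻¹ * r) = E2 i (s⁻¹ * r) := fun s hs => by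
    have := e2 s hs 1 hV1
    rwa [inv_one, mul_one] at this
  simp only [phi]
  congr 1
  · congr 1
    · exact propext (exists_congr fun t => and_congr_right fun ht => by rw [e1 t ht])
    · congr 1
      exact propext (exists_congr fun v => and_congr_right fun hv => exists_congr fun s =>
        and_congr_right fun hs => by rw [e2 s hs v hv])
  · exact propext (exists_congr fun t => and_congr_right fun ht => by rw [e3 t ht])

theorem exists_C [Infinite G] (hicc : ∀ g : G, g ≠ 1 → {h : G | IsConj g h}.Infinite)
    {V : Set G} (hV : V.Finite) (hV1 : (1 : G) ∈ V) (hVi : ∀ x ∈ V, x⁻¹ ∈ V) :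
    ∃ (C : Set (G → Prop)) (D Bf : Set G), D.Finite ∧ Bf.Finite ∧ SI D C ∧ Inv C ∧
      (∀ c ∈ C, ∀ x y w, c x → c y → w ∈ V → x = w * y → w = 1) ∧
      (∀ c ∈ C, ∀ g1 g2, ∃ b ∈ Bf, c (b * g1) ∧ c (b * g2)) := by
  obtain ⟨T, P1, hT, hP1, ⟨t0, ht0⟩, hTs, hP1s, hTP⟩ := exists_P1 hicc hV hV1 hVi
  obtain ⟨b, hb⟩ := ((hP1.inv.mul (hV.mul hV)).mul hP1).exists_notMem
  have hb2 : ∀ p ∈ P1, ∀ p' ∈ P1, ∀ v ∈ V, ∀ v' ∈ V, p * b = v * v' * p' → False := by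
    intro p hp p' hp' v hv v' hv' h
    apply hb
    have : b = p⁻¹ * (v * v') * p' := by rw [mul_assoc, ← h]; group
    rw [this]
    exact Set.mul_mem_mul (Set.mul_mem_mul (Set.inv_mem_inv.2 hp) (Set.mul_mem_mul hv hv')) hp'
  set A : Set G := P1 ∪ P1 * {b} with hA
  have hAf : A.Finite := hP1.union (hP1.mul (Set.finite_singleton b))
  have hAs : ∀ x ∈ A, ∀ y ∈ A, ∀ w ∈ V, x = w * y → w = 1 := by
    rintro x (hx | ⟨x, hx, _, rfl, rfl⟩) y (hy | ⟨y, hy, _, rfl, rfl⟩) w hw e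
    · exact hP1s x hx y hy w hw e
    · refine (hb2 y hy x hx w⁻¹ (hVi w hw) 1 hV1 ?_).elim
      rw [e]; group
    · exact (hb2 x hx y hy w hw 1 hV1 (by rw [mul_one]; exact e)).elim
    · refine hP1s x hx y hy w hw ?_
      dsimp only at e
      rw [← mul_assoc] at e
      exact mul_right_cancel e
  set K : Set G := {x | ∃ p ∈ P1, ∃ q ∈ P1, p * x ∈ V * A ∧ q * b * x ∈ V * A} ∪ {1} with hK
  have hKf : K.Finite := by
    refine Set.Finite.union (Set.Finite.subset (hP1.inv.mul (hV.mul hAf)) ?_) (Set.finite_singleton 1)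
    rintro x ⟨p, hp, q, hq, h1, h2⟩
    exact ⟨p⁻¹, Set.inv_mem_inv.2 hp, p * x, h1, by simp⟩
  have hK1 : (1 : G) ∈ K := Or.inr rfl
  set L0 : Set G := V * P1 * {b} * P1⁻¹ * V with hL0
  have hL0f : L0.Finite := ((((hV.mul hP1).mul (Set.finite_singleton b)).mul hP1.inv).mul hV)
  set Psi : Set G := V ∪ (L0 ∪ L0⁻¹) with hPsi
  have hPsif : Psi.Finite := hV.union (hL0f.union hL0f.inv)
  obtain ⟨z, hz1, hz2, -⟩ := exists_generic hicc
    (((hPsif.mul hAf).mul hKf.inv).union ((hKf.mul hKf.inv).union hPsif))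
  have hzA : ∀ ψ ∈ Psi, ∀ a ∈ A, ∀ x ∈ K, z * x = ψ * a → False := by
    intro ψ hψ a ha x hx h
    apply hz1
    left
    refine ⟨ψ * a, Set.mul_mem_mul hψ ha, x⁻¹, Set.inv_mem_inv.2 hx, ?_⟩
    simp only [← h]; group
  have hzz : ∀ ψ ∈ Psi, ∀ x ∈ K, ∀ y ∈ K, z * x = ψ * (z * y) → x = y := by
    intro ψ hψ x hx y hy h
    by_contra hxy
    refine hz2 (x * y⁻¹) (Or.inr (Or.inl ⟨x, hx, y⁻¹, Set.inv_mem_inv.2 hy, rfl⟩)) ?_ ?_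
    · intro h; exact hxy (mul_inv_eq_one.1 h)
    · right; right
      have : z * (x * y⁻¹) * z⁻¹ = ψ := by
        calc _ = z * x * (y⁻¹ * z⁻¹) := by group
          _ = _ := by rw [h]; group
      rw [this]; exact hψ
  set P : Set G := A ∪ {z} * K with hP
  have hPf : P.Finite := hAf.union ((Set.finite_singleton z).mul hKf)
  have hPs : ∀ x ∈ P, ∀ y ∈ P, ∀ w ∈ V, x = w * y → w = 1 := by
    rintro x (hx | ⟨_, rfl, x, hx, rfl⟩) y (hy | ⟨_, rfl, y, hy, rfl⟩) w hw e
    · exact hAs x hx y hy w hw e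
    · refine (hzA w⁻¹ (Or.inl (hVi w hw)) x hx y hy ?_).elim
      rw [e]; group
    · exact (hzA w (Or.inl hw) y hy x hx e).elim
    · dsimp only at e
      have := hzz w (Or.inl hw) x hx y hy e
      subst this
      simpa using e
  -- the independence parameters
  set B : Set G := T⁻¹ * V * T with hB
  have hBf : B.Finite := (hT.inv.mul hV).mul hT
  have hB1 : (1 : G) ∈ B :=
    ⟨t0⁻¹ * 1, Set.mul_mem_mul (Set.inv_mem_inv.2 ht0) hV1, t0, ht0, by simp⟩
  have hBi : ∀ x ∈ B, x⁻¹ ∈ B := by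
    rintro _ ⟨_, ⟨x, hx, v, hv, rfl⟩, y, hy, rfl⟩
    refine ⟨y⁻¹ * v⁻¹, Set.mul_mem_mul (Set.inv_mem_inv.2 hy) (hVi v hv), x⁻¹, hx, ?_⟩
    simp only; group
  set L2 : Set G := (P⁻¹ * V * P) ∪ (P⁻¹ * L0 * P) with hL2
  have hL2f : L2.Finite := ((hPf.inv.mul hV).mul hPf).union ((hPf.inv.mul hL0f).mul hPf)
  set B2 : Set G := (L2 ∪ L2⁻¹) ∪ {1} with hB2
  have hB2f : B2.Finite := (hL2f.union hL2f.inv).union (Set.finite_singleton 1)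
  have hB21 : (1 : G) ∈ B2 := Or.inr rfl
  have hB2i : ∀ x ∈ B2, x⁻¹ ∈ B2 := by
    rintro x ((hx | hx) | hx)
    · exact Or.inl (Or.inr (Set.inv_mem_inv.2 hx))
    · exact Or.inl (Or.inl hx)
    · right; rw [hx]; simp
  refine ⟨{C | ∃ E ∈ MIS B, ∃ E2 ∈ MIS B2, C = phi V T P E E2},
    (B * B ∪ B2 * B2) * (T⁻¹ ∪ P⁻¹ * V⁻¹), P * B2, ?_, hPf.mul hB2f,
    phi_SI hV1 hB1 hBi hB21 hB2i, phi_inv, ?_, ?_⟩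
  · exact ((hBf.mul hBf).union (hB2f.mul hB2f)).mul (hT.inv.union (hPf.inv.mul hV.inv))
  · rintro _ ⟨E, hE, E2, hE2, rfl⟩ x y w hx hy hw e
    rcases hx with ⟨⟨t, ht, hEt⟩, hno⟩ | ⟨s, hs, hEs⟩ <;>
      rcases hy with ⟨⟨t', ht', hEt'⟩, hno'⟩ | ⟨s', hs', hEs'⟩
    · have := hE.1 _ _ (t⁻¹ * w * t') hEt' hEt
        (Set.mul_mem_mul (Set.mul_mem_mul (Set.inv_mem_inv.2 ht) hw) ht') (by rw [e]; group)
      refine hTs t ht t' ht' w hw ?_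
      rw [e] at this
      have h3 : (t⁻¹ * w) * y = t'⁻¹ * y := by rw [mul_assoc]; exact this
      have h4 := mul_right_cancel h3
      rw [eq_inv_iff_mul_eq_one, mul_assoc, inv_mul_eq_one] at h4
      exact h4
    · refine (hno ⟨w, hw, s', hs', ?_⟩).elim
      rw [e]; simpa [mul_assoc] using hEs'
    · refine (hno' ⟨w⁻¹, hVi w hw, s, hs, ?_⟩).elim
      rw [e] at hEs; simpa [mul_assoc] using hEs
    · have := hE2.1 _ _ (s⁻¹ * w * s') hEs' hEs (Or.inl (Or.inl (Or.inl
        (Set.mul_mem_mul (Set.mul_mem_mul (Set.inv_mem_inv.2 hs) hw) hs')))) (by rw [e]; group)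
      refine hPs s hs s' hs' w hw ?_
      rw [e] at this
      have h3 : (s⁻¹ * w) * y = s'⁻¹ * y := by rw [mul_assoc]; exact this
      have h4 := mul_right_cancel h3
      rw [eq_inv_iff_mul_eq_one, mul_assoc, inv_mul_eq_one] at h4
      exact h4
  · rintro _ ⟨E, hE, E2, hE2, rfl⟩ g1 g2
    have key : ∀ h, ∃ p ∈ P, phi V T P E E2 (p * h) := by
      intro h
      obtain ⟨_, ⟨_, ⟨x, hx, v, hv, rfl⟩, y, hy, rfl⟩, hk1⟩ := hE.2 h
      obtain ⟨t, ht, hp1⟩ := hTP x⁻¹ hx v hv y hy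
      obtain ⟨_, ⟨_, ⟨x', hx', v', hv', rfl⟩, y', hy', rfl⟩, hk2⟩ := hE.2 (b * h)
      obtain ⟨t', ht', hp2⟩ := hTP x'⁻¹ hx' v' hv' y' hy'
      simp only [inv_inv] at hp1 hp2
      set p1 := t * (x * v * y) with hp1d
      set p2 := t' * (x' * v' * y') with hp2d
      by_cases c1 : ∃ v ∈ V, ∃ s ∈ P, E2 (s⁻¹ * v⁻¹ * (p1 * h))
      swap
      · refine ⟨p1, Or.inl (Or.inl hp1), Or.inl ⟨⟨t, ht, ?_⟩, c1⟩⟩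
        rw [hp1d]
        simpa [mul_assoc] using hk1
      by_cases c2 : ∃ v ∈ V, ∃ s ∈ P, E2 (s⁻¹ * v⁻¹ * (p2 * b * h))
      swap
      · refine ⟨p2 * b, Or.inl (Or.inr (Set.mul_mem_mul hp2 rfl)), Or.inl ⟨⟨t', ht', ?_⟩, c2⟩⟩
        rw [hp2d]
        simpa [mul_assoc] using hk2
      obtain ⟨v1, hv1, s1, hs1, he1⟩ := c1
      obtain ⟨v2, hv2, s2, hs2, he2⟩ := c2
      have hL0m : v2⁻¹ * p2 * b * p1⁻¹ * v1 ∈ L0 :=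
        Set.mul_mem_mul (Set.mul_mem_mul (Set.mul_mem_mul (Set.mul_mem_mul (hVi v2 hv2) hp2) rfl)
          (Set.inv_mem_inv.2 hp1)) hv1
      have hee := hE2.1 _ _ (s2⁻¹ * (v2⁻¹ * p2 * b * p1⁻¹ * v1) * s1) he1 he2
        (Or.inl (Or.inl (Or.inr (Set.mul_mem_mul (Set.mul_mem_mul (Set.inv_mem_inv.2 hs2) hL0m) hs1))))
        (by group)
      set e := s1⁻¹ * v1⁻¹ * (p1 * h) with hed
      have hs12 : s2 = (v2⁻¹ * p2 * b * p1⁻¹ * v1) * s1 := by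
        apply mul_right_cancel (b := e)
        calc s2 * e = v2⁻¹ * (p2 * b * h) := by rw [← hee]; group
          _ = _ := by rw [hed]; group
      have hs21 : s1 = (v2⁻¹ * p2 * b * p1⁻¹ * v1)⁻¹ * s2 := by rw [hs12]; group
      have hneq : s1 ≠ s2 := by
        intro h12
        rw [h12] at hs12
        have h1 := right_eq_mul.1 hs12
        refine hb2 p2 hp2 p1 hp1 v2 hv2 v1⁻¹ (hVi _ hv1) ?_
        calc p2 * b = v2 * (v2⁻¹ * p2 * b * p1⁻¹ * v1) * v1⁻¹ * p1 := by group
          _ = _ := by rw [h1]; group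
      rcases hs1 with hs1 | ⟨_, rfl, x1, hx1, rfl⟩ <;> rcases hs2 with hs2 | ⟨_, rfl, x2, hx2, rfl⟩
      · -- the good case
        refine ⟨z, Or.inr ⟨z, rfl, 1, hK1, by simp⟩, Or.inr ⟨z * (h * e⁻¹), Or.inr ⟨z, rfl, h * e⁻¹, ?_, rfl⟩, ?_⟩⟩
        · left
          refine ⟨p1, hp1, p2, hp2, ⟨v1, hv1, s1, hs1, ?_⟩, ⟨v2, hv2, s2, hs2, ?_⟩⟩
          · simp only [hed]; group
          · simp only [← hee]; group
        · have : (z * (h * e⁻¹))⁻¹ * (z * h) = e := by group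
          rw [this]; exact he1
      · exact (hzA _ (Or.inr (Or.inl hL0m)) s1 hs1 x2 hx2 hs12).elim
      · exact (hzA _ (Or.inr (Or.inr (Set.inv_mem_inv.2 hL0m))) s2 hs2 x1 hx1 hs21).elim
      · exact (hneq (by rw [hzz _ (Or.inr (Or.inl hL0m)) x2 hx2 x1 hx1 hs12])).elim
    obtain ⟨b2, hb2, hE2b⟩ := hE2.2 g1
    obtain ⟨p, hp, hph⟩ := key (b2 * g2)
    refine ⟨p * b2, Set.mul_mem_mul hp hb2, Or.inr ⟨p, hp, ?_⟩, by rwa [mul_assoc]⟩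
    simpa [mul_assoc] using hE2b

end blend
end IccAux

namespace IccAux
section onestep
variable {G : Type u} [Group G]

theorem one_step [Infinite G] (hicc : ∀ g : G, g ≠ 1 → {h : G | IsConj g h}.Infinite)
    {A : Type v} {Y : Set (G → A)} {D F : Set G} (hD : D.Finite) (hY : SI D Y) (hinv : Inv Y)
    (hF : F.Finite) :
    ∃ (Y' : Set (G → A)) (D' Bf : Set G), Y' ⊆ Y ∧ D'.Finite ∧ Bf.Finite ∧ SI D' Y' ∧ Inv Y' ∧
      ∀ y ∈ Y', ∀ g1 g2, ∃ b ∈ Bf, ∀ f ∈ F, y (f * (b * g1)) = y (f * (b * g2)) := by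
  obtain ⟨y0, hy0, -⟩ := hY PEmpty (fun i => i.elim) (fun i => i.elim) (fun i => i.elim)
    (fun i => i.elim)
  set V : Set G := (D * F)⁻¹ * (D * F) ∪ {1} with hV
  have hVf : V.Finite := ((hD.mul hF).inv.mul (hD.mul hF)).union (Set.finite_singleton 1)
  have hVi : ∀ x ∈ V, x⁻¹ ∈ V := by
    rintro x (⟨a, ha, c, hc, rfl⟩ | hx)
    · left
      exact ⟨c⁻¹, Set.inv_mem_inv.2 hc, a⁻¹, ha, by simp⟩
    · right; rw [hx]; simp
  obtain ⟨C, DC, Bf, hDC, hBf, hCSI, hCinv, hCsep, hCB⟩ := exists_C hicc hVf (Or.inr rfl) hVi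
  set E : Set G := F⁻¹ * D⁻¹ * D with hE
  have hEf : E.Finite := (hF.inv.mul hD.inv).mul hD
  refine ⟨{y | y ∈ Y ∧ ∃ c ∈ C, ∀ x, c x → ∀ f ∈ F, y (f * x) = y0 f}, D ∪ E ∪ DC * E, Bf,
    fun y hy => hy.1, (hD.union hEf).union (hDC.mul hEf), hBf, ?_, ?_, ?_⟩
  · intro ι R y hy hR
    have hyY := fun i => (hy i).1
    have hyC := fun i => (hy i).2
    choose c hc hcy using hyC
    obtain ⟨c0, hc0, hc0c⟩ := hCSI ι (fun i => E * R i) c hc (by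
      intro i j hij
      refine (hR i j hij).mono ?_ ?_ <;>
      · simp only [← mul_assoc]
        gcongr
        exact Set.subset_union_right)
    let ι' : Type u := ι ⊕ {x : G // c0 x ∧ ∀ i, x ∉ E * R i}
    let own : G → ι' → Prop := fun x k =>
      Sum.elim (fun i => x ∈ E * R i) (fun q => x = q.1) k
    have hown : ∀ x k k', own x k → own x k' → k = k' := by
      rintro x (i | q) (j | q') h h'
      · congr 1
        by_contra hij
        have hsub : ∀ i, E * R i ⊆ (D ∪ E ∪ DC * E) * R i := fun i => by
          gcongr
          exact Set.subset_union_right.trans Set.subset_union_left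
        exact Set.disjoint_left.1 (hR i j hij) (hsub i h) (hsub j h')
      · have h' : x = q'.1 := h'
        subst h'
        exact (q'.2.2 i h).elim
      · have h : x = q.1 := h
        subst h
        exact (q.2.2 j h').elim
      · have h : x = q.1 := h
        have h' : x = q'.1 := h'
        congr 1
        exact Subtype.ext (h.symm.trans h')
    have hcc : ∀ d ∈ D, ∀ f ∈ F, ∀ x, c0 x → ∀ d' ∈ D, ∀ f' ∈ F, ∀ x', c0 x' →
        d * (f * x) = d' * (f' * x') → x = x' := by
      intro d hd f hf x hx d' hd' f' hf' x' hx' h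
      have e : x = ((d * f)⁻¹ * (d' * f')) * x' := by
        calc x = (d * f)⁻¹ * (d * (f * x)) := by group
          _ = _ := by rw [h]; group
      have := hCsep c0 hc0 x x' _ hx hx' (Or.inl (Set.mul_mem_mul
        (Set.inv_mem_inv.2 (Set.mul_mem_mul hd hf)) (Set.mul_mem_mul hd' hf'))) e
      rw [e, this, one_mul]
    have hcr : ∀ d ∈ D, ∀ f ∈ F, ∀ x, ∀ d' ∈ D, ∀ i, ∀ r ∈ R i, d * (f * x) = d' * r →
        own x (Sum.inl i) := by
      intro d hd f hf x d' hd' i r hr h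
      have e : x = (f⁻¹ * d⁻¹ * d') * r := by
        calc x = (f⁻¹ * d⁻¹) * (d * (f * x)) := by group
          _ = _ := by rw [h]; group
      show x ∈ E * R i
      rw [e]
      exact Set.mul_mem_mul (Set.mul_mem_mul (Set.mul_mem_mul (Set.inv_mem_inv.2 hf)
        (Set.inv_mem_inv.2 hd)) hd') hr
    let Reg : ι' → Set G := fun k =>
      {x | (∃ i, k = Sum.inl i ∧ x ∈ R i) ∨ ∃ f ∈ F, ∃ q, c0 q ∧ own q k ∧ x = f * q}
    let val : ι' → G → A := fun k => Sum.elim (fun i => y i) (fun q => fun h => y0 (h * q.1⁻¹)) k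
    obtain ⟨z, hz, hzv⟩ := hY ι' Reg val (by
      rintro (i | q)
      · exact hyY i
      · exact hinv y0 hy0 _) (by
      intro k k' hkk
      rw [Set.disjoint_left]
      rintro _ ⟨d, hd, x, hx, rfl⟩ ⟨d', hd', x', hx', heq⟩
      apply hkk
      rcases hx with ⟨i, rfl, hx⟩ | ⟨f, hf, q, hq, hqk, rfl⟩ <;>
        rcases hx' with ⟨j, rfl, hx'⟩ | ⟨f', hf', q', hq', hqk', rfl⟩
      · congr 1
        by_contra hij
        have hsub : ∀ i, D * R i ⊆ (D ∪ E ∪ DC * E) * R i := fun i => by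
          gcongr
          exact Set.subset_union_left.trans Set.subset_union_left
        exact Set.disjoint_left.1 (hR i j hij) (hsub i (Set.mul_mem_mul hd hx))
          (hsub j ⟨d', hd', x', hx', heq⟩)
      · exact hown q' _ _ (hcr d' hd' f' hf' q' d hd i x hx heq) hqk'
      · exact hown q _ _ hqk (hcr d hd f hf q d' hd' j x' hx' heq.symm)
      · have := hcc d hd f hf q hq d' hd' f' hf' q' hq' heq.symm
        subst this
        exact hown q _ _ hqk hqk')
    refine ⟨z, ⟨hz, c0, hc0, ?_⟩, ?_⟩
    · intro x hx f hf
      by_cases h : ∃ i, x ∈ E * R i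
      · obtain ⟨i, hi⟩ := h
        have h1 := hzv (Sum.inl i) (f * x) (Or.inr ⟨f, hf, x, hx, hi, rfl⟩)
        have h2 : c i x := by rw [← hc0c i x hi]; exact hx
        rw [h1]
        exact hcy i x h2 f hf
      · push Not at h
        have h1 := hzv (Sum.inr ⟨x, hx, h⟩) (f * x) (Or.inr ⟨f, hf, x, hx, rfl, rfl⟩)
        rw [h1]
        show y0 (f * x * x⁻¹) = y0 f
        rw [mul_inv_cancel_right]
    · intro i r hr
      exact hzv (Sum.inl i) r (Or.inl ⟨i, rfl, hr⟩)
  · rintro y ⟨hyY, c, hc, hcy⟩ g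
    refine ⟨hinv y hyY g, _, hCinv c hc g, ?_⟩
    intro x hx f hf
    have := hcy _ hx f hf
    show y (f * x * g) = y0 f
    rw [mul_assoc]; exact this
  · rintro y ⟨hyY, c, hc, hcy⟩ g1 g2
    obtain ⟨b, hb, h1, h2⟩ := hCB c hc g1 g2
    exact ⟨b, hb, fun f hf => by rw [hcy _ h1 f hf, hcy _ h2 f hf]⟩

/-- the single coordinate -/
theorem exists_point [Countable G] (hicc : ∀ g : G, g ≠ 1 → {h : G | IsConj g h}.Infinite)
    {g : G} (hg : g ≠ 1) :
    ∃ x : G → Bool, (∀ k, ¬ (x k = true ∧ x (g * k) = true)) ∧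
      (∀ k, x k = true ∨ x (g * k) = true ∨ x (g⁻¹ * k) = true) ∧
      ∀ F : Set G, F.Finite → ∃ B : Set G, B.Finite ∧ ∀ g1 g2, ∃ b ∈ B, ∀ f ∈ F,
        x (f * (b * g1)) = x (f * (b * g2)) := by
  classical
  have : Infinite G := by
    rw [← not_finite_iff_infinite]
    intro hfin
    exact hicc g hg (Set.toFinite _)
  set B0 : Set G := {1, g, g⁻¹} with hB0
  have hB0f : B0.Finite := Set.toFinite _
  have hB01 : (1 : G) ∈ B0 := Or.inl rfl
  have hB0i : ∀ x ∈ B0, x⁻¹ ∈ B0 := by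
    rintro x (rfl | rfl | hx)
    · left; simp
    · right; right; rfl
    · right; left; rw [hx, inv_inv]
  let St := {p : Set (G → Prop) × Set G // p.2.Finite ∧ SI p.2 p.1 ∧ Inv p.1}
  have hstep : ∀ (s : St) (F : Finset G), ∃ s' : St, s'.1.1 ⊆ s.1.1 ∧ ∃ B : Set G, B.Finite ∧
      ∀ y ∈ s'.1.1, ∀ g1 g2, ∃ b ∈ B, ∀ f ∈ F, y (f * (b * g1)) = y (f * (b * g2)) := by
    intro s F
    obtain ⟨Y', D', Bf, h1, h2, h3, h4, h5, h6⟩ := one_step hicc s.2.1 s.2.2.1 s.2.2.2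
      (F := (F : Set G)) F.finite_toSet
    exact ⟨⟨(Y', D'), h2, h4, h5⟩, h1, Bf, h3, h6⟩
  choose nx hnx1 hnx2 using hstep
  obtain ⟨en, hen⟩ := exists_surjective_nat (Finset G)
  let s : ℕ → St := fun n => Nat.rec ⟨(MIS B0, B0 * B0), hB0f.mul hB0f, MIS_SI hB01 hB0i, MIS_inv B0⟩
    (fun n S => nx S (en n)) n
  have hs : ∀ n, s (n + 1) = nx (s n) (en n) := fun n => rfl
  have hanti : Antitone fun n => (s n).1.1 := antitone_nat_of_succ_le fun n => by
    rw [hs]; exact hnx1 _ _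
  have hne : ∀ n, ∃ y, y ∈ (s n).1.1 := by
    intro n
    obtain ⟨y, hy, -⟩ := (s n).2.2.1 PEmpty (fun i => i.elim) (fun i => i.elim) (fun i => i.elim)
      (fun i => i.elim)
    exact ⟨y, hy⟩
  choose y hy using hne
  have hyn : ∀ m n, m ≤ n → y n ∈ (s m).1.1 := fun m n h => hanti h (hy n)
  let U : Ultrafilter ℕ := Ultrafilter.of Filter.atTop
  have hU : (U : Filter ℕ) ≤ Filter.atTop := Ultrafilter.of_le _
  have hxe : ∀ h, ∀ᶠ n in (U : Filter ℕ), (decide (∀ᶠ m in (U : Filter ℕ), y m h) = true) ↔ y n h := by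
    intro h
    rcases U.em (fun n => y n h) with h1 | h1
    · filter_upwards [h1] with n hn
      simp only [decide_eq_true_eq]
      exact ⟨fun _ => hn, fun _ => h1⟩
    · filter_upwards [h1] with n hn
      simp only [decide_eq_true_eq]
      refine ⟨fun h2 => ?_, fun h2 => (hn h2).elim⟩
      obtain ⟨m, hm1, hm2⟩ := (h1.and h2).exists
      exact (hm1 hm2).elim
  refine ⟨fun h => decide (∀ᶠ m in (U : Filter ℕ), y m h), ?_, ?_, ?_⟩
  · rintro k ⟨h1, h2⟩
    obtain ⟨n, hn1, hn2⟩ := ((hxe k).and (hxe (g * k))).exists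
    have e := (hyn 0 n (Nat.zero_le n)).1 k (g * k) g (hn1.1 h1) (hn2.1 h2) (Or.inr (Or.inl rfl)) rfl
    exact hg (by simpa using e)
  · intro k
    obtain ⟨n, hn1, hn2, hn3⟩ := ((hxe k).and ((hxe (g * k)).and (hxe (g⁻¹ * k)))).exists
    obtain ⟨b, hb, hbk⟩ := (hyn 0 n (Nat.zero_le n)).2 k
    rcases hb with rfl | rfl | rfl
    · left; exact hn1.2 (by rwa [one_mul] at hbk)
    · right; left; exact hn2.2 hbk
    · right; right; exact hn3.2 hbk
  · intro F hF
    obtain ⟨m, hm⟩ := hen hF.toFinset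
    obtain ⟨B, hB, hBy⟩ := hnx2 (s m) (en m)
    refine ⟨B, hB, ?_⟩
    intro g1 g2
    have h1 : ∀ᶠ n in (U : Filter ℕ), m + 1 ≤ n := hU (Filter.eventually_ge_atTop (m + 1))
    have h2 : ∀ᶠ n in (U : Filter ℕ), ∃ b ∈ B, ∀ f ∈ F, y n (f * (b * g1)) = y n (f * (b * g2)) := by
      filter_upwards [h1] with n hn
      obtain ⟨b, hb, hbf⟩ := hBy (y n) (by rw [← hs]; exact hyn (m + 1) n hn) g1 g2
      exact ⟨b, hb, fun f hf => hbf f (by rw [hm]; simpa using hf)⟩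
    have h3 : ∃ b ∈ B, ∀ᶠ n in (U : Filter ℕ), ∀ f ∈ F, y n (f * (b * g1)) = y n (f * (b * g2)) := by
      exact (Ultrafilter.eventually_exists_mem_iff hB).1 h2
    obtain ⟨b, hb, h4⟩ := h3
    refine ⟨b, hb, fun f hf => ?_⟩
    obtain ⟨n, hn1, hn2, hn3⟩ := ((hxe (f * (b * g1))).and ((hxe (f * (b * g2))).and h4)).exists
    rw [Bool.eq_iff_iff, hn1, hn2, hn3 f hf]

/-- the combined point -/
theorem exists_full_point [Countable G] (hicc : ∀ g : G, g ≠ 1 → {h : G | IsConj g h}.Infinite) :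
    ∃ x : G → {g : G // g ≠ 1} → Bool,
      (∀ g k, ¬ (x k g = true ∧ x (g.1 * k) g = true)) ∧
      (∀ g k, x k g = true ∨ x (g.1 * k) g = true ∨ x (g.1⁻¹ * k) g = true) ∧
      ∀ (J : Finset {g : G // g ≠ 1}) (F : Set G), F.Finite → ∃ B : Set G, B.Finite ∧
        ∀ g1 g2, ∃ b ∈ B, ∀ f ∈ F, ∀ j ∈ J, x (f * (b * g1)) j = x (f * (b * g2)) j := by
  classical
  choose x h1 h2 h3 using fun g : {g : G // g ≠ 1} => exists_point hicc g.2
  refine ⟨fun h g => x g h, h1, h2, ?_⟩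
  intro J
  induction J using Finset.induction_on with
  | empty => exact fun F _ => ⟨{1}, Set.finite_singleton 1, fun g1 g2 => ⟨1, rfl, by simp⟩⟩
  | insert i J hi ih =>
    intro F hF
    obtain ⟨Bi, hBi, hi2⟩ := h3 i F hF
    obtain ⟨BJ, hBJ, hJ2⟩ := ih (F * Bi) (hF.mul hBi)
    refine ⟨Bi * BJ, hBi.mul hBJ, ?_⟩
    intro g1 g2
    obtain ⟨b, hb, hbb⟩ := hJ2 g1 g2
    obtain ⟨c, hc, hcc⟩ := hi2 (b * g1) (b * g2)
    refine ⟨c * b, Set.mul_mem_mul hc hb, ?_⟩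
    intro f hf j hj
    rcases Finset.mem_insert.1 hj with rfl | hj
    · have := hcc f hf
      simpa [mul_assoc] using this
    · have := hbb (f * c) (Set.mul_mem_mul hf hc) j hj
      simpa [mul_assoc] using this

end onestep
end IccAux

namespace IccAux
section flow
variable {G : Type u} [Group G]

/-- explicit shift -/
def sh {A : Type v} (g : G) (y : G → A) : G → A := fun h => y (h * g)

theorem sh_one {A : Type v} (y : G → A) : sh 1 y = y := by funext h; simp [sh]

theorem sh_mul {A : Type v} (g k : G) (y : G → A) : sh (g * k) y = sh g (sh k y) := by
  funext h; simp [sh, mul_assoc]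

theorem sh_cont {A : Type v} [TopologicalSpace A] (g : G) : Continuous (sh (A := A) g) := by
  unfold sh; fun_prop

/-- orbit closure -/
def oc {A : Type v} [TopologicalSpace A] (y : G → A) : Set (G → A) :=
  closure (Set.range fun g : G => sh g y)

theorem oc_inv {A : Type v} [TopologicalSpace A] (y : G → A) (g : G) {x : G → A} (hx : x ∈ oc y) :
    sh g x ∈ oc y := by
  refine map_mem_closure (sh_cont g) hx ?_
  rintro _ ⟨k, rfl⟩
  exact ⟨g * k, sh_mul g k y⟩

theorem oc_self {A : Type v} [TopologicalSpace A] (y : G → A) : y ∈ oc y :=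
  subset_closure ⟨1, sh_one y⟩

theorem oc_sub {A : Type v} [TopologicalSpace A] {y : G → A} {M : Set (G → A)} (hM : IsClosed M)
    (hi : ∀ g : G, ∀ x ∈ M, sh g x ∈ M) (hy : y ∈ M) : oc y ⊆ M := by
  refine closure_minimal ?_ hM
  rintro _ ⟨k, rfl⟩
  exact hi k y hy

theorem exists_minimal {A : Type v} [TopologicalSpace A] [CompactSpace A] (y : G → A) :
    ∃ M : Set (G → A), IsClosed M ∧ M.Nonempty ∧ (∀ g : G, ∀ x ∈ M, sh g x ∈ M) ∧ M ⊆ oc y ∧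
      ∀ x ∈ M, M ⊆ oc x := by
  obtain ⟨M, hM1, hM2⟩ := zorn_superset_nonempty
    {M : Set (G → A) | IsClosed M ∧ M.Nonempty ∧ (∀ g : G, ∀ x ∈ M, sh g x ∈ M)} (by
    intro c hc hchain hne
    refine ⟨⋂₀ c, ⟨isClosed_sInter fun s hs => (hc hs).1, ?_, ?_⟩,
      fun s hs => Set.sInter_subset_of_mem hs⟩
    · have : Nonempty c := hne.to_subtype
      refine IsCompact.nonempty_sInter_of_directed_nonempty_isCompact_isClosed
        ?_ (fun s hs => (hc hs).2.1) (fun s hs => (hc hs).1.isCompact) (fun s hs => (hc hs).1)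
      intro s hs s' hs'
      rcases hchain.total hs hs' with h | h
      · exact ⟨s, hs, subset_rfl, h⟩
      · exact ⟨s', hs', h, subset_rfl⟩
    · intro g x hx s hs
      exact (hc hs).2.2 g x (hx s hs)) (oc y) ⟨isClosed_closure, ⟨y, oc_self y⟩, fun g x hx => oc_inv y g hx⟩
  refine ⟨M, hM2.prop.1, hM2.prop.2.1, hM2.prop.2.2, hM1, ?_⟩
  intro x hx
  exact hM2.le_of_le ⟨isClosed_closure, ⟨x, oc_self x⟩, fun g z hz => oc_inv x g hz⟩
    (oc_sub hM2.prop.1 hM2.prop.2.2 hx)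

/-- the action on an invariant subset -/
@[reducible] def subAct {A : Type v} (M : Set (G → A)) (hM : ∀ g : G, ∀ x ∈ M, sh g x ∈ M) :
    MulAction G M where
  smul g x := ⟨sh g x.1, hM g x.1 x.2⟩
  one_smul x := Subtype.ext (sh_one x.1)
  mul_smul g k x := Subtype.ext (sh_mul g k x.1)

end flow
end IccAux

/-- Every countable icc group (every non-identity element has an infinite
conjugacy class) admits a free, metrizable, minimal, proximal flow. -/
theorem icc_group_admits_free_metrizable_minimal_proximal_flow
    {G : Type u} [Group G] [Countable G]
    (hicc : ∀ g : G, g ≠ 1 → {h : G | IsConj g h}.Infinite) :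
    ∃ X : GFlow G,
      CompactSpace X.carrier ∧ T2Space X.carrier ∧ Nonempty X.carrier ∧
      TopologicalSpace.MetrizableSpace X.carrier ∧ ContinuousConstSMul G X.carrier ∧
      IsMinimalFlow G X.carrier ∧ IsProximalFlow G X.carrier ∧
      (∀ (g : G) (x : X.carrier), g • x = x → g = 1) := by
  classical
  obtain ⟨z, hz1, hz2, hz3⟩ := IccAux.exists_full_point hicc
  obtain ⟨M, hMc, hMn, hMi, hMz, hMmin⟩ := IccAux.exists_minimal z
  let act : MulAction G M := IccAux.subAct M hMi
  have hsm : ∀ (g : G) (x : M), (g • x).1 = IccAux.sh g x.1 := fun g x => rfl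
  have : CompactSpace M := isCompact_iff_compactSpace.1 hMc.isCompact
  have : TopologicalSpace.MetrizableSpace (G → {g : G // g ≠ 1} → Bool) :=
    TopologicalSpace.metrizableSpace_of_t3_secondCountable _
  have hmet : TopologicalSpace.MetrizableSpace M := inferInstance
  -- finitary relations pass to the orbit closure
  have hrel : ∀ (P : Bool → Bool → Bool → Prop) (g : {g : G // g ≠ 1}) (k1 k2 k3 : G),
      (∀ h, P (z (k1 * h) g) (z (k2 * h) g) (z (k3 * h) g)) → ∀ x ∈ M, P (x k1 g) (x k2 g) (x k3 g) := by
    intro P g k1 k2 k3 hP x hx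
    have hcl : IsClosed {x : G → {g : G // g ≠ 1} → Bool | P (x k1 g) (x k2 g) (x k3 g)} := by
      have hc : Continuous fun x : G → {g : G // g ≠ 1} → Bool => (x k1 g, x k2 g, x k3 g) := by
        fun_prop
      exact (isClosed_discrete {q : Bool × Bool × Bool | P q.1 q.2.1 q.2.2}).preimage hc
    exact closure_minimal (by rintro _ ⟨h, rfl⟩; exact hP h) hcl (hMz hx)
  have hagree : ∀ (x y : M) (q : Finset G × Finset {g : G // g ≠ 1}), ∃ b : G,
      ∀ f ∈ q.1, ∀ j ∈ q.2, x.1 (f * b) j = y.1 (f * b) j := by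
    intro x y q
    obtain ⟨B, hB, hBz⟩ := hz3 q.2 (q.1 : Set G) q.1.finite_toSet
    have hcl : IsClosed (⋃ b ∈ B, ⋂ f ∈ q.1, ⋂ j ∈ q.2,
        {p : (G → {g : G // g ≠ 1} → Bool) × (G → {g : G // g ≠ 1} → Bool) |
          p.1 (f * b) j = p.2 (f * b) j}) := by
      refine hB.isClosed_biUnion fun b _ => isClosed_biInter fun f _ => isClosed_biInter fun j _ => ?_
      exact isClosed_eq (by fun_prop) (by fun_prop)
    have hmem : (x.1, y.1) ∈ closure ((Set.range fun g : G => IccAux.sh g z) ×ˢ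
        (Set.range fun g : G => IccAux.sh g z)) := by
      rw [closure_prod_eq]
      exact ⟨hMz x.2, hMz y.2⟩
    have := closure_minimal (by
      rintro ⟨_, _⟩ ⟨⟨g1, rfl⟩, ⟨g2, rfl⟩⟩
      obtain ⟨b, hb, hbb⟩ := hBz g1 g2
      simp only [Set.mem_iUnion, Set.mem_iInter]
      refine ⟨b, hb, fun f hf j hj => ?_⟩
      have := hbb f hf j hj
      simpa [IccAux.sh, mul_assoc] using this) hcl hmem
    simp only [Set.mem_iUnion, Set.mem_iInter] at this
    obtain ⟨b, -, hb⟩ := this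
    exact ⟨b, hb⟩
  have hcont : ∀ g : G, Continuous fun x : M => g • x := fun g =>
    Continuous.subtype_mk ((IccAux.sh_cont g).comp continuous_subtype_val) _
  refine ⟨{ carrier := M, topology := inferInstance, mulAction := act }, ?_, ?_, ?_, ?_, ?_, ?_, ?_, ?_⟩
  · show CompactSpace M
    infer_instance
  · show T2Space M
    infer_instance
  · show Nonempty M
    exact hMn.to_subtype
  · exact hmet
  · exact ⟨hcont⟩
  · intro x
    show Dense (MulAction.orbit G (x : M))
    rw [Subtype.dense_iff]
    refine (hMmin x.1 x.2).trans (closure_mono ?_)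
    rintro _ ⟨g, rfl⟩
    exact ⟨g • x, ⟨g, rfl⟩, rfl⟩
  · show ∀ x₁ x₂ : M, ∃ y : M, (y, y) ∈ closure (Set.range fun g : G => (g • x₁, g • x₂))
    intro x₁ x₂
    choose b hb using hagree x₁ x₂
    let U : Ultrafilter (Finset G × Finset {g : G // g ≠ 1}) := Ultrafilter.of Filter.atTop
    have hU : (U : Filter (Finset G × Finset {g : G // g ≠ 1})) ≤ Filter.atTop := Ultrafilter.of_le _
    have : Nonempty M := hMn.to_subtype
    obtain ⟨y, hy⟩ : ∃ y : M, Filter.Tendsto (fun q => b q • x₁) U (nhds y) :=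
      ⟨(U.map fun q => b q • x₁).lim, Ultrafilter.le_nhds_lim (U.map fun q => b q • x₁)⟩
    have hy2 : Filter.Tendsto (fun q => b q • x₂) U (nhds y) := by
      rw [tendsto_subtype_rng, tendsto_pi_nhds] at hy ⊢
      intro h
      have hyh := hy h
      rw [tendsto_pi_nhds] at hyh ⊢
      intro j
      refine (hyh j).congr' ?_
      have : ∀ᶠ q in (U : Filter (Finset G × Finset {g : G // g ≠ 1})),
          (({h}, {j}) : Finset G × Finset {g : G // g ≠ 1}) ≤ q := hU (Filter.eventually_ge_atTop _)
      filter_upwards [this] with q hq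
      exact hb q h (hq.1 (Finset.mem_singleton_self h)) j (hq.2 (Finset.mem_singleton_self j))
    exact ⟨y, mem_closure_of_tendsto (hy.prodMk_nhds hy2) (Filter.Eventually.of_forall fun q => ⟨b q, rfl⟩)⟩
  · intro g x hgx
    by_contra hg
    change (g • (x : M)) = x at hgx
    have hx : ∀ h, x.1 (h * g) = x.1 h := fun h => congrFun (congrArg Subtype.val hgx) h
    have h1 := hrel (fun p q _ => ¬ (p = true ∧ q = true)) ⟨g, hg⟩ 1 g 1 (fun h => by
      have := hz1 ⟨g, hg⟩ h
      simpa using this) x.1 x.2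
    have h2 := hrel (fun p q r => p = true ∨ q = true ∨ r = true) ⟨g, hg⟩ 1 g g⁻¹ (fun h => by
      have := hz2 ⟨g, hg⟩ h
      simpa using this) x.1 x.2
    have e1 := hx 1
    have e2 := hx g⁻¹
    rw [one_mul] at e1
    rw [inv_mul_cancel] at e2
    rw [e1] at h1 h2
    rw [← e2] at h2
    simp at h1 h2
    rw [h1] at h2
    exact Bool.noConfusion h2
end

section
/- Let G be a countable, infinite discrete group. For every finite D ⊆ G there exists a strongly irreducible subshift Y ⊆ 2^G such that for every y ∈ Y, the set {g ∈ G : y(g) = 1} is D-separated and nonempty. -/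
open Pointwise

/-- A subshift `Z ⊆ A^G` is strongly irreducible if there is a finite `D ⊆ G` such that
for all finite `E₁, E₂ ⊆ G` which are `D`-apart (`DE₁ ∩ DE₂ = ∅`) and all `z₁, z₂ ∈ Z`
there is `x ∈ Z` agreeing with `z₁` on `E₁` and with `z₂` on `E₂`. -/
def StronglyIrreducible (G : Type*) [Group G] {A : Type*} (Z : Set (G → A)) : Prop :=
  ∃ D : Set G, D.Finite ∧
    ∀ E₁ E₂ : Set G, E₁.Finite → E₂.Finite → Disjoint (D * E₁) (D * E₂) →
      ∀ z₁ ∈ Z, ∀ z₂ ∈ Z, ∃ x ∈ Z,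
        (∀ g ∈ E₁, x g = z₁ g) ∧ (∀ g ∈ E₂, x g = z₂ g)

theorem exists_maximal_indep {G : Type*} [Group G] (K : Set G)
    (h1 : (1 : G) ∈ K) (hinv : ∀ k ∈ K, k⁻¹ ∈ K) (S : Set G)
    (hS : ∀ g ∈ S, ∀ h ∈ S, h * g⁻¹ ∈ K → g = h) :
    ∃ T : Set G, S ⊆ T ∧ (∀ g ∈ T, ∀ h ∈ T, h * g⁻¹ ∈ K → g = h) ∧
      ∀ g, ∃ k ∈ K, k * g ∈ T := by
  obtain ⟨T, hST, hT⟩ := zorn_subset_nonempty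
    {T : Set G | ∀ g ∈ T, ∀ h ∈ T, h * g⁻¹ ∈ K → g = h} (by
      intro c hc hchain _
      refine ⟨⋃₀ c, ?_, fun s hs => Set.subset_sUnion_of_mem hs⟩
      rintro g ⟨a, ha, hga⟩ h ⟨b, hb, hhb⟩ hk
      rcases hchain.total ha hb with hab | hab
      · exact hc hb g (hab hga) h hhb hk
      · exact hc ha g hga h (hab hhb) hk) S hS
  refine ⟨T, hST, hT.prop, fun g => ?_⟩
  by_contra! hg
  have hgT : g ∉ T := fun h => hg 1 h1 (by simpa using h)
  apply hgT
  apply hT.le_of_ge (y := insert g T) _ (Set.subset_insert g T) (Set.mem_insert g T)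
  rintro a (rfl | ha) b (rfl | hb) hk
  · rfl
  · exact absurd (by simpa using hb) (hg _ hk)
  · refine absurd (by simpa using ha) (hg _ (hinv _ hk))
  · exact hT.prop a ha b hb hk

/-- Let `G` be a countable, infinite discrete group.  For every finite
`D ⊆ G` there exists a (nonempty) strongly irreducible subshift `Y ⊆ 2^G` such that for
every `y ∈ Y` the set `{g : y g = 1}` is `D`-separated and nonempty. -/
theorem exists_strongly_irreducible_separated_subshift
    (G : Type*) [Group G] [Countable G] [Infinite G]
    (D : Set G) (hD : D.Finite) :
    ∃ Y : Set (G → Bool), IsClosed Y ∧ (∀ (g : G), ∀ y ∈ Y, g • y ∈ Y) ∧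
      Y.Nonempty ∧ StronglyIrreducible G Y ∧
      ∀ y ∈ Y, DSeparated G D {g : G | y g = true} ∧ {g : G | y g = true}.Nonempty := by
  classical
  let DD : Set G := insert 1 D
  have hDD : DD.Finite := hD.insert 1
  let K : Set G := DD⁻¹ * DD
  have hK : K.Finite := hDD.inv.mul hDD
  have h1D : (1 : G) ∈ DD := Set.mem_insert 1 D
  have h1 : (1 : G) ∈ K := ⟨1, by simpa using h1D, 1, h1D, by simp⟩
  have hinv : ∀ k ∈ K, k⁻¹ ∈ K := by
    rintro _ ⟨a, ha, b, hb, rfl⟩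
    exact ⟨b⁻¹, by simpa using hb, a⁻¹, ha, by simp⟩
  let Y : Set (G → Bool) := {y | (∀ g h, h * g⁻¹ ∈ K → g ≠ h → ¬ (y g = true ∧ y h = true)) ∧
    ∀ g, ∃ k ∈ K, y (k * g) = true}
  have key : ∀ S : Set G, (∀ g ∈ S, ∀ h ∈ S, h * g⁻¹ ∈ K → g = h) →
      ∃ y ∈ Y, ∀ g ∈ S, y g = true := by
    intro S hS
    obtain ⟨T, hST, hT, hm⟩ := exists_maximal_indep K h1 hinv S hS
    refine ⟨fun g => decide (g ∈ T), ⟨?_, ?_⟩, ?_⟩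
    · intro g h hk hne hh
      simp only [decide_eq_true_eq] at hh
      exact hne (hT g hh.1 h hh.2 hk)
    · simpa using hm
    · intro g hg
      simpa using hST hg
  refine ⟨Y, ?_, ?_, ?_, ?_, ?_⟩
  · have hev : ∀ g : G, IsClosed {y : G → Bool | y g = true} := fun g =>
      isClosed_eq (continuous_apply g) continuous_const
    have hev' : ∀ g h : G, IsClosed {y : G → Bool | ¬ (y g = true ∧ y h = true)} := by
      intro g h
      have hc : Continuous fun y : G → Bool => (y g, y h) :=
        (continuous_apply g).prodMk (continuous_apply h)
      exact IsClosed.preimage hc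
        (isClosed_discrete {p : Bool × Bool | ¬ (p.1 = true ∧ p.2 = true)})
    have : Y = (⋂ g, ⋂ h, ⋂ (_ : h * g⁻¹ ∈ K), ⋂ (_ : g ≠ h),
        {y : G → Bool | ¬ (y g = true ∧ y h = true)}) ∩
        ⋂ g, ⋃ k ∈ K, {y : G → Bool | y (k * g) = true} := by
      ext y
      simp only [Y, Set.mem_inter_iff, Set.mem_iInter, Set.mem_iUnion, Set.mem_ofPred_eq,
        exists_prop]
    rw [this]
    refine IsClosed.inter ?_ (isClosed_iInter fun g => hK.isClosed_biUnion fun k _ => hev _)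
    exact isClosed_iInter fun g => isClosed_iInter fun h => isClosed_iInter fun _ =>
      isClosed_iInter fun _ => hev' g h
  · rintro a y ⟨hy1, hy2⟩
    refine ⟨fun g h hk hne => hy1 (g * a) (h * a) (by simpa [mul_assoc] using hk)
      (by simpa using hne), fun g => ?_⟩
    obtain ⟨k, hk, hy⟩ := hy2 (g * a)
    refine ⟨k, hk, ?_⟩
    show y (k * g * a) = true
    rwa [mul_assoc]
  · obtain ⟨y, hy, _⟩ := key ∅ (by simp)
    exact ⟨y, hy⟩
  · refine ⟨K * K, hK.mul hK, ?_⟩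
    intro E₁ E₂ _ _ hdis z₁ hz₁ z₂ hz₂
    have apart : ∀ g ∈ K * E₁, ∀ h ∈ K * E₂, h * g⁻¹ ∉ K := by
      rintro _ ⟨k₁, hk₁, e₁, he₁, rfl⟩ _ ⟨k₂, hk₂, e₂, he₂, rfl⟩ hk
      refine (Set.disjoint_left.1 hdis : ∀ ⦃a⦄, _ → _) (?_ : k₂ * e₂ ∈ K * K * E₁) ?_
      · exact ⟨_, ⟨_, hk, _, hk₁, rfl⟩, e₁, he₁, by simp [mul_assoc]⟩
      · exact ⟨_, ⟨1, h1, _, hk₂, rfl⟩, e₂, he₂, by simp⟩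
    have indep : ∀ z ∈ Y, ∀ g h, z g = true → z h = true → h * g⁻¹ ∈ K → g = h := by
      intro z hz g h hg hh hk
      by_contra hne
      exact hz.1 g h hk hne ⟨hg, hh⟩
    obtain ⟨x, hx, hxS⟩ := key ({g | g ∈ K * E₁ ∧ z₁ g = true} ∪ {g | g ∈ K * E₂ ∧ z₂ g = true}) (by
      rintro g (hg | hg) h (hh | hh) hk
      · exact indep z₁ hz₁ g h hg.2 hh.2 hk
      · exact absurd hk (apart g hg.1 h hh.1)
      · exact absurd (by simpa using hinv _ hk) (apart h hh.1 g hg.1)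
      · exact indep z₂ hz₂ g h hg.2 hh.2 hk)
    have agree : ∀ z ∈ Y, ∀ E : Set G, (∀ g ∈ K * E, z g = true → x g = true) →
        ∀ g ∈ E, x g = z g := by
      intro z hz E hE g hg
      obtain ⟨k, hk, hzk⟩ := hz.2 g
      have hxk := hE (k * g) ⟨k, hk, g, hg, rfl⟩ hzk
      rw [Bool.eq_iff_iff]
      refine ⟨fun h => ?_, fun h => hE g ⟨1, h1, g, hg, by simp⟩ h⟩
      rw [indep x hx g (k * g) h hxk (by simpa using hk)]
      exact hzk
    exact ⟨x, hx, agree z₁ hz₁ E₁ fun g hg h => hxS g (Or.inl ⟨hg, h⟩),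
      agree z₂ hz₂ E₂ fun g hg h => hxS g (Or.inr ⟨hg, h⟩)⟩
  · rintro y ⟨hy1, hy2⟩
    refine ⟨?_, ?_⟩
    · intro g hg h hh hne
      rw [Set.disjoint_left]
      rintro _ ⟨d, hd, _, rfl, rfl⟩ ⟨d₂, hd', _, rfl, he⟩
      refine hy1 _ _ ?_ hne ⟨hg, hh⟩
      refine ⟨d₂⁻¹, Set.inv_mem_inv.2 (Set.mem_insert_of_mem 1 hd'), d, Set.mem_insert_of_mem 1 hd, ?_⟩
      simp only at he ⊢
      rw [inv_mul_eq_iff_eq_mul, ← mul_assoc, he, mul_inv_cancel_right]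
    · obtain ⟨k, _, h⟩ := hy2 1
      exact ⟨_, h⟩
end
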